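/- For every real B > 1, the set 𝓕(B) = { x ∈ (0,1) irrational : a_n(x)·a_{n+1}(x) ≥ B^n for infinitely many n ∈ ℕ, and a_{n+1}(x) < B^n for all sufficiently large n ∈ ℕ } satisfies dim_H 𝓕(B) = t_B, where t_B = inf{ s ≥ 0 : limsup_{n→∞} (1/n)·log Σ_{(a_1,…,a_n) ∈ (ℕ≥1)^n} B^{−n·s²}·q_n(a_1,…,a_n)^{−2s} ≤ 0 } (the limsup taken in the extended reals), i.e. t_B = inf{ s ≥ 0 : P(T, −s·log|T′| − s²·log B) ≤ 0 }. -/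

import Mathlib

open Filter MeasureTheory Set

/-- The Gauss map `T(x) = 1/x - ⌊1/x⌋`. -/
noncomputable def gaussMap (x : ℝ) : ℝ := 1 / x - (⌊1 / x⌋ : ℤ)

/-- The `n`-th partial quotient `a_n(x)` (for `n ≥ 1`) of the continued
fraction expansion of `x`: `a_n(x) = ⌊1 / T^{n-1}(x)⌋`. -/
noncomputable def pq (x : ℝ) (n : ℕ) : ℕ := ⌊1 / (gaussMap^[n - 1] x)⌋₊

/-- The continuant `q_n(a_1, …, a_n)`: `q_0 = 1`, `q_1 = a_1`,
`q_k = a_k q_{k-1} + q_{k-2}`. -/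
def contQ : (n : ℕ) → (Fin n → ℕ) → ℕ
  | 0, _ => 1
  | 1, a => a 0
  | (n + 2), a =>
      a (Fin.last (n + 1)) * contQ (n + 1) (Fin.init a) +
        contQ n (Fin.init (Fin.init a))

/-- `s_B`: the Wang–Wu pressure exponent. -/
noncomputable def sExp (B : ℝ) : ℝ :=
  sInf {s : ℝ | 0 ≤ s ∧
    Filter.atTop.limsup (fun n : ℕ =>
      (((n : ℝ)⁻¹ : ℝ) : EReal) * ENNReal.log (∑' a : Fin n → ℕ+,
        ENNReal.ofReal ((B ^ n * ((contQ n fun i => (a i : ℕ)) : ℝ) ^ 2) ^ (-s)))) ≤ 0}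

/-- `g_{B₁,B₂}`: the two-parameter pressure exponent. -/
noncomputable def gExp (B₁ B₂ : ℝ) : ℝ :=
  sInf {s : ℝ | 0 ≤ s ∧
    Filter.atTop.limsup (fun n : ℕ =>
      (((n : ℝ)⁻¹ : ℝ) : EReal) * ENNReal.log (∑' a : Fin n → ℕ+,
        ENNReal.ofReal (B₂ ^ ((1 - s) * (n : ℝ)) *
          (B₁ ^ n * ((contQ n fun i => (a i : ℕ)) : ℝ) ^ 2) ^ (-s)))) ≤ 0}

/-- `t_B = inf{ s ≥ 0 : P(T, -s log|T'| - s² log B) ≤ 0 }`. -/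
noncomputable def tExp (B : ℝ) : ℝ :=
  sInf {s : ℝ | 0 ≤ s ∧
    Filter.atTop.limsup (fun n : ℕ =>
      (((n : ℝ)⁻¹ : ℝ) : EReal) * ENNReal.log (∑' a : Fin n → ℕ+,
        ENNReal.ofReal (B ^ (-(n : ℝ) * s ^ 2) *
          ((contQ n fun i => (a i : ℕ)) : ℝ) ^ (-(2 * s))))) ≤ 0}


/-! ### Geometry of continued fraction cylinders -/

/-- inverse branch of the Gauss map along a word -/
noncomputable def cfm : List ℕ → ℝ → ℝ
  | [], θ => θ
  | a :: w, θ => 1 / ((a : ℝ) + cfm w θ)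

/-- denominators: `cfD w θ = q_n + θ q_{n-1}` -/
noncomputable def cfD : List ℕ → ℝ → ℝ
  | [], _ => 1
  | a :: w, θ => ((a : ℝ) + cfm w θ) * cfD w θ

def PosW (w : List ℕ) : Prop := ∀ a ∈ w, 1 ≤ a

lemma PosW.nil : PosW [] := by intro a ha; simp at ha

lemma PosW.cons_iff {a : ℕ} {w : List ℕ} : PosW (a :: w) ↔ 1 ≤ a ∧ PosW w := by
  simp [PosW]

lemma PosW.append_iff {v w : List ℕ} : PosW (v ++ w) ↔ PosW v ∧ PosW w := by
  simp only [PosW, List.mem_append]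
  constructor
  · intro h; exact ⟨fun a ha => h a (Or.inl ha), fun a ha => h a (Or.inr ha)⟩
  · rintro ⟨h1, h2⟩ a (ha | ha)
    · exact h1 a ha
    · exact h2 a ha

lemma cfm_nonneg (w : List ℕ) {θ : ℝ} (h : 0 ≤ θ) : 0 ≤ cfm w θ := by
  induction w with
  | nil => exact h
  | cons a w ih => simp only [cfm]; positivity

lemma cfm_mem {w : List ℕ} (hw : PosW w) {θ : ℝ} (h : θ ∈ Icc (0:ℝ) 1) : cfm w θ ∈ Icc (0:ℝ) 1 := by
  cases w with
  | nil => exact h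
  | cons a w =>
    have h0 := cfm_nonneg w h.1
    have ha : (1:ℝ) ≤ a := by exact_mod_cast (PosW.cons_iff.1 hw).1
    refine ⟨cfm_nonneg _ h.1, ?_⟩
    simp only [cfm]
    rw [div_le_one (by linarith)]; linarith

lemma cfm_pos {w : List ℕ} (hw : PosW w) {θ : ℝ} (h : 0 ≤ θ) (hne : w ≠ []) : 0 < cfm w θ := by
  cases w with
  | nil => exact absurd rfl hne
  | cons a w =>
    have h0 := cfm_nonneg w h
    have ha : (1:ℝ) ≤ a := by exact_mod_cast (PosW.cons_iff.1 hw).1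
    simp only [cfm]; positivity

lemma cfm_pos' {w : List ℕ} (hw : PosW w) {θ : ℝ} (h : 0 < θ) : 0 < cfm w θ := by
  cases w with
  | nil => exact h
  | cons a w => exact cfm_pos hw h.le (by simp)

lemma cfm_mem_Ioo {w : List ℕ} (hw : PosW w) {θ : ℝ} (h : θ ∈ Ioo (0:ℝ) 1) :
    cfm w θ ∈ Ioo (0:ℝ) 1 := by
  cases w with
  | nil => exact h
  | cons a w =>
    have h0 := cfm_pos' (PosW.cons_iff.1 hw).2 h.1
    have ha : (1:ℝ) ≤ a := by exact_mod_cast (PosW.cons_iff.1 hw).1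
    refine ⟨cfm_pos' hw h.1, ?_⟩
    simp only [cfm]
    rw [div_lt_one (by linarith)]; linarith

/-- two nonempty words applied one after the other land in the open interval -/
lemma cfm_mem_Ioo' {v w : List ℕ} (hv : PosW v) (hw : PosW w) (hv' : v ≠ []) (hw' : w ≠ [])
    {θ : ℝ} (h : θ ∈ Icc (0:ℝ) 1) : cfm v (cfm w θ) ∈ Ioo (0:ℝ) 1 := by
  have h1 := cfm_pos hw h.1 hw'
  cases v with
  | nil => exact absurd rfl hv'
  | cons a v =>
    have h0 := cfm_pos' (PosW.cons_iff.1 hv).2 h1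
    have ha : (1:ℝ) ≤ a := by exact_mod_cast (PosW.cons_iff.1 hv).1
    refine ⟨cfm_pos' hv h1, ?_⟩
    simp only [cfm]
    rw [div_lt_one (by linarith)]; linarith

lemma cfm_append (v w : List ℕ) (θ : ℝ) : cfm (v ++ w) θ = cfm v (cfm w θ) := by
  induction v with
  | nil => rfl
  | cons a v ih => simp only [List.cons_append, cfm, ih]

lemma cfD_append (v w : List ℕ) (θ : ℝ) : cfD (v ++ w) θ = cfD v (cfm w θ) * cfD w θ := by
  induction v with
  | nil => simp [cfD]
  | cons a v ih => simp only [List.cons_append, cfD, ih, cfm_append]; ring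

lemma one_le_cfD {w : List ℕ} (hw : PosW w) {θ : ℝ} (h : 0 ≤ θ) : 1 ≤ cfD w θ := by
  induction w with
  | nil => simp [cfD]
  | cons a w ih =>
    have h0 := cfm_nonneg w h
    have ha : (1:ℝ) ≤ a := by exact_mod_cast (PosW.cons_iff.1 hw).1
    have := ih (PosW.cons_iff.1 hw).2
    simp only [cfD]; nlinarith

lemma cfm_dist {w : List ℕ} (hw : PosW w) {θ θ' : ℝ} (h : 0 ≤ θ) (h' : 0 ≤ θ') :
    |cfm w θ - cfm w θ'| = |θ - θ'| / (cfD w θ * cfD w θ') := by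
  induction w with
  | nil => simp [cfm, cfD]
  | cons a w ih =>
    have hw2 := (PosW.cons_iff.1 hw).2
    have h0 := cfm_nonneg w h
    have h0' := cfm_nonneg w h'
    have ha : (1:ℝ) ≤ a := by exact_mod_cast (PosW.cons_iff.1 hw).1
    have hD := one_le_cfD hw2 h
    have hD' := one_le_cfD hw2 h'
    have e : cfm (a :: w) θ - cfm (a :: w) θ' =
        -((cfm w θ - cfm w θ') / (((a:ℝ) + cfm w θ) * ((a:ℝ) + cfm w θ'))) := by
      simp only [cfm]
      have : (a:ℝ) + cfm w θ ≠ 0 := by linarith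
      have : (a:ℝ) + cfm w θ' ≠ 0 := by linarith
      field_simp; ring
    rw [e, abs_neg, abs_div, ih hw2,
      abs_of_pos (show (0:ℝ) < ((a:ℝ) + cfm w θ) * ((a:ℝ) + cfm w θ') by positivity)]
    simp only [cfD]
    rw [div_div]; congr 1; ring

lemma cfD_affine {w : List ℕ} (hw : PosW w) : ∃ q' : ℝ, 0 ≤ q' ∧ q' ≤ cfD w 0 ∧
    ∀ θ : ℝ, 0 ≤ θ → cfD w θ = cfD w 0 + θ * q' := by
  induction w using List.reverseRecOn with
  | nil => exact ⟨0, le_rfl, by simp [cfD], by simp [cfD]⟩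
  | append_singleton w a ih =>
    obtain ⟨hw1, hw2⟩ := PosW.append_iff.1 hw
    obtain ⟨q', h0, h1, h2⟩ := ih hw1
    have ha : (1:ℝ) ≤ a := by exact_mod_cast hw2 a (by simp)
    have hD := one_le_cfD hw1 (le_refl (0:ℝ))
    have key : ∀ θ : ℝ, 0 ≤ θ → cfD (w ++ [a]) θ = (a + θ) * cfD w 0 + q' := by
      intro θ hθ
      rw [cfD_append]
      simp only [cfm, cfD]
      rw [h2 _ (by positivity)]
      have : (a:ℝ) + θ ≠ 0 := by linarith
      field_simp
    refine ⟨cfD w 0, by linarith, ?_, ?_⟩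
    · rw [key 0 le_rfl]; nlinarith
    · intro θ hθ
      rw [key θ hθ, key 0 le_rfl]; ring

lemma cfD_le {w : List ℕ} (hw : PosW w) {θ : ℝ} (h : θ ∈ Icc (0:ℝ) 1) :
    cfD w θ ≤ 2 * cfD w 0 := by
  obtain ⟨q', h0, h1, h2⟩ := cfD_affine hw
  rw [h2 θ h.1]; nlinarith [h.2]

lemma le_cfD {w : List ℕ} (hw : PosW w) {θ : ℝ} (h : 0 ≤ θ) :
    cfD w 0 ≤ cfD w θ := by
  obtain ⟨q', h0, h1, h2⟩ := cfD_affine hw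
  rw [h2 θ h]; nlinarith

lemma cfD_append_le {v w : List ℕ} (hv : PosW v) (hw : PosW w) :
    cfD (v ++ w) 0 ≤ 2 * cfD v 0 * cfD w 0 := by
  rw [cfD_append]
  have := one_le_cfD hw (le_refl (0:ℝ))
  exact mul_le_mul_of_nonneg_right (cfD_le hv (cfm_mem hw (by simp))) (by linarith)

lemma le_cfD_append {v w : List ℕ} (hv : PosW v) (hw : PosW w) :
    cfD v 0 * cfD w 0 ≤ cfD (v ++ w) 0 := by
  rw [cfD_append]
  have := one_le_cfD hw (le_refl (0:ℝ))
  exact mul_le_mul_of_nonneg_right (le_cfD hv (cfm_nonneg _ le_rfl)) (by linarith)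

lemma cfm_dist_le {w : List ℕ} (hw : PosW w) {θ θ' : ℝ} (h : 0 ≤ θ) (h' : 0 ≤ θ') :
    |cfm w θ - cfm w θ'| ≤ |θ - θ'| / (cfD w 0) ^ 2 := by
  rw [cfm_dist hw h h']
  have := one_le_cfD hw (le_refl (0:ℝ))
  have h1 := le_cfD hw h
  have h2 := le_cfD hw h'
  gcongr
  nlinarith

lemma le_cfm_dist {w : List ℕ} (hw : PosW w) {θ θ' : ℝ} (h : θ ∈ Icc (0:ℝ) 1)
    (h' : θ' ∈ Icc (0:ℝ) 1) :
    |θ - θ'| / (4 * (cfD w 0) ^ 2) ≤ |cfm w θ - cfm w θ'| := by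
  rw [cfm_dist hw h.1 h'.1]
  have := one_le_cfD hw (le_refl (0:ℝ))
  have h1 := cfD_le hw h
  have h2 := cfD_le hw h'
  have h3 := one_le_cfD hw h.1
  have h4 := one_le_cfD hw h'.1
  have h5 : cfD w θ * cfD w θ' ≤ 4 * (cfD w 0) ^ 2 := by nlinarith
  gcongr

lemma cfD_growth {w : List ℕ} (hw : PosW w) : (2:ℝ) ^ w.length ≤ 2 * (cfD w 0) ^ 2 := by
  induction w using List.twoStepInduction with
  | nil => simp [cfD]
  | singleton a =>
    have ha : (1:ℝ) ≤ a := by exact_mod_cast hw a (by simp)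
    simp only [cfD, cfm, List.length_singleton]; nlinarith
  | cons_cons a b w ih _ =>
    have h1 := PosW.cons_iff.1 hw
    have h2 := PosW.cons_iff.1 h1.2
    have ha : (1:ℝ) ≤ a := by exact_mod_cast h1.1
    have hb : (1:ℝ) ≤ b := by exact_mod_cast h2.1
    have hD := one_le_cfD h2.2 (le_refl (0:ℝ))
    have h0 := cfm_nonneg w (le_refl (0:ℝ))
    have := ih h2.2
    have e : cfD (a :: b :: w) 0 = (a * (b + cfm w 0) + 1) * cfD w 0 := by
      simp only [cfD, cfm]
      have : (b:ℝ) + cfm w 0 ≠ 0 := by linarith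
      field_simp
    have h5 : 2 * cfD w 0 ≤ cfD (a :: b :: w) 0 := by
      rw [e]; gcongr; nlinarith
    simp only [List.length_cons, pow_succ]
    nlinarith

lemma cfD_ofFn : ∀ (n : ℕ) (a : Fin (n+1) → ℕ), (∀ i, 1 ≤ a i) → ∀ θ : ℝ, 0 ≤ θ →
    cfD (List.ofFn a) θ = contQ (n+1) a + θ * contQ n (Fin.init a) := by
  intro n
  induction n with
  | zero => intro a ha θ hθ; simp [contQ, cfD, cfm]
  | succ n ih =>
    intro a ha θ hθ
    rw [List.ofFn_succ', List.concat_eq_append, cfD_append]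
    have ha' : (1:ℝ) ≤ a (Fin.last (n+1)) := by exact_mod_cast ha _
    have := ih (Fin.init a) (fun i => ha _) (cfm [a (Fin.last (n+1))] θ) (cfm_nonneg _ hθ)
    have e : (List.ofFn fun i : Fin (n+1) => a i.castSucc) = List.ofFn (Fin.init a) := rfl
    rw [e, this]
    simp only [cfm, cfD, contQ]
    have : (a (Fin.last (n+1)) : ℝ) + θ ≠ 0 := by linarith
    push_cast
    field_simp
    ring

lemma contQ_eq (n : ℕ) (a : Fin n → ℕ+) :
    (contQ n (fun i => (a i : ℕ)) : ℝ) = cfD (List.ofFn (fun i => (a i : ℕ))) 0 := by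
  cases n with
  | zero => simp [contQ, cfD]
  | succ n => rw [cfD_ofFn n (fun i => (a i : ℕ)) (fun i => (a i).2) 0 le_rfl]; simp

lemma PosW.ofFn {n : ℕ} (a : Fin n → ℕ+) : PosW (List.ofFn (fun i => (a i : ℕ))) := by
  intro b hb
  rw [List.mem_ofFn] at hb
  obtain ⟨i, rfl⟩ := hb
  exact (a i).2

/-! ### partial quotients -/

lemma gaussMap_cons {a : ℕ} {w : List ℕ} {y : ℝ} (hw : PosW w) (hy : y ∈ Ioo (0:ℝ) 1) :
    gaussMap (cfm (a :: w) y) = cfm w y ∧ ⌊1 / cfm (a :: w) y⌋₊ = a := by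
  have h := cfm_mem_Ioo hw hy
  simp only [gaussMap, cfm, one_div_one_div]
  have h1 : ⌊(a:ℝ) + cfm w y⌋ = (a:ℤ) := by
    rw [Int.floor_eq_iff]; push_cast; constructor <;> linarith [h.1, h.2]
  constructor
  · rw [h1]; push_cast; ring
  · rw [Nat.floor_eq_iff (by have := h.1; positivity)]; constructor <;> linarith [h.1, h.2]

lemma pq_cfm {w : List ℕ} (hw : PosW w) {y : ℝ} (hy : y ∈ Ioo (0:ℝ) 1) (j : ℕ)
    (hj : j < w.length) : pq (cfm w y) (j+1) = w[j] := by
  induction w generalizing j with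
  | nil => simp at hj
  | cons a w ih =>
    obtain ⟨h1, h2⟩ := gaussMap_cons (a := a) (PosW.cons_iff.1 hw).2 hy
    cases j with
    | zero => simpa [pq] using h2
    | succ j =>
      have := ih (PosW.cons_iff.1 hw).2 j (by simpa using hj)
      simp only [List.getElem_cons_succ]
      rw [← this]
      simp only [pq, Nat.add_sub_cancel, Function.iterate_succ_apply, h1]

lemma rat_length {w : List ℕ} (hw : PosW w) {y : ℝ} (hy : y ∈ Ioo (0:ℝ) 1) (p q : ℤ)
    (hq : 0 < q) (h : cfm w y = p / q) : (w.length : ℤ) ≤ q := by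
  induction w generalizing p q with
  | nil => simp; omega
  | cons a w ih =>
    have h1 := cfm_mem_Ioo hw hy
    have h2 := cfm_mem_Ioo (PosW.cons_iff.1 hw).2 hy
    have hq' : (0:ℝ) < q := by exact_mod_cast hq
    rw [h] at h1
    have hp : (0:ℝ) < p := by have := h1.1; rwa [div_pos_iff_of_pos_right hq'] at this
    have hpq : (p:ℝ) < q := by have := h1.2; rwa [div_lt_one hq'] at this
    have hp' : 0 < p := by exact_mod_cast hp
    have hpq' : p < q := by exact_mod_cast hpq
    have := ih (PosW.cons_iff.1 hw).2 (q - a * p) p hp' (by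
      simp only [cfm] at h
      have h3 : (a:ℝ) + cfm w y = q / p := by
        rw [← one_div_one_div ((a:ℝ) + cfm w y), h, one_div_div]
      push_cast
      have : (p:ℝ) ≠ 0 := hp.ne'
      field_simp at h3 ⊢
      linarith)
    simp only [List.length_cons]; push_cast; omega

lemma gauss_irr {x : ℝ} (hx : x ∈ Ioo (0:ℝ) 1) (hi : Irrational x) :
    gaussMap x ∈ Ioo (0:ℝ) 1 ∧ Irrational (gaussMap x) ∧ 1 ≤ pq x 1 ∧
      x = 1 / ((pq x 1 : ℝ) + gaussMap x) := by
  have h1 : Irrational (1 / x) := by simpa using hi.inv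
  have h2 : Irrational (gaussMap x) := by
    unfold gaussMap; exact h1.sub_intCast _
  have h3 : 1 < 1 / x := by rw [lt_div_iff₀ hx.1]; linarith [hx.2]
  have h4 : (pq x 1 : ℝ) = ((⌊1 / x⌋ : ℤ) : ℝ) := by
    simp only [pq, Nat.sub_self, Function.iterate_zero, id]
    exact natCast_floor_eq_intCast_floor (by linarith)
  refine ⟨⟨?_, ?_⟩, h2, ?_, ?_⟩
  · have : 0 ≤ gaussMap x := by unfold gaussMap; linarith [Int.floor_le (1/x)]
    exact lt_of_le_of_ne this (fun h => h2.ne_zero h.symm)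
  · unfold gaussMap; linarith [Int.lt_floor_add_one (1/x)]
  · simp only [pq, Nat.sub_self, Function.iterate_zero, id]
    exact Nat.le_floor (by simpa using h3.le)
  · rw [h4]; unfold gaussMap; simp

lemma pq_gauss (x : ℝ) (n : ℕ) : pq (gaussMap x) (n+1) = pq x (n+2) := by
  simp [pq, Function.iterate_succ_apply]

lemma irr_expand (n : ℕ) : ∀ {x : ℝ}, x ∈ Ioo (0:ℝ) 1 → Irrational x →
    gaussMap^[n] x ∈ Ioo (0:ℝ) 1 ∧ Irrational (gaussMap^[n] x) ∧ (∀ i, i < n → 1 ≤ pq x (i+1)) ∧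
      x = cfm (List.ofFn (fun i : Fin n => pq x (i+1))) (gaussMap^[n] x) := by
  induction n with
  | zero => intro x hx hi; exact ⟨hx, hi, by simp, by simp [cfm]⟩
  | succ n ih =>
    intro x hx hi
    obtain ⟨g1, g2, g3, g4⟩ := gauss_irr hx hi
    obtain ⟨h1, h2, h3, h4⟩ := ih g1 g2
    rw [Function.iterate_succ_apply]
    refine ⟨h1, h2, ?_, ?_⟩
    · intro i hi
      cases i with
      | zero => exact g3
      | succ i => rw [← pq_gauss]; exact h3 i (by omega)
    · rw [List.ofFn_succ]
      simp only [cfm]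
      have e : (fun i : Fin n => pq x (i.succ + 1)) = fun i : Fin n => pq (gaussMap x) (i+1) := by
        funext i; rw [pq_gauss]; simp
      simp only [Fin.val_zero, Nat.zero_add]
      rw [e, ← h4]
      exact g4

lemma cfm_ne {v w : List ℕ} (hv : PosW v) (hw : PosW w) (hl : v.length = w.length) (hne : v ≠ w)
    {y z : ℝ} (hy : y ∈ Ioo (0:ℝ) 1) (hz : z ∈ Ioo (0:ℝ) 1) : cfm v y ≠ cfm w z := by
  induction v generalizing w with
  | nil => cases w with
    | nil => exact absurd rfl hne
    | cons a w => simp at hl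
  | cons a v ih => cases w with
    | nil => simp at hl
    | cons b w =>
      intro h
      have h1 := gaussMap_cons (a := a) (PosW.cons_iff.1 hv).2 hy
      have h2 := gaussMap_cons (a := b) (PosW.cons_iff.1 hw).2 hz
      rw [h] at h1
      have hab : a = b := h1.2.symm.trans h2.2
      subst hab
      exact ih (PosW.cons_iff.1 hv).2 (PosW.cons_iff.1 hw).2 (by simpa using hl)
        (by rintro rfl; exact hne rfl) (h1.1.symm.trans h2.1)


/-! ### Mass distribution on a continued fraction Cantor set -/

def Wd (ω : ℕ → List ℕ) : ℕ → List ℕ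
  | 0 => []
  | i + 1 => Wd ω i ++ ω i

lemma Wd_pos {ω : ℕ → List ℕ} (h : ∀ i, PosW (ω i)) (i : ℕ) : PosW (Wd ω i) := by
  induction i with
  | zero => exact PosW.nil
  | succ i ih => exact PosW.append_iff.2 ⟨ih, h i⟩

lemma Wd_length {ω : ℕ → List ℕ} (h : ∀ i, ω i ≠ []) (i : ℕ) : i ≤ (Wd ω i).length := by
  induction i with
  | zero => simp
  | succ i ih =>
    simp only [Wd, List.length_append]
    have := List.length_pos_of_ne_nil (h i)
    omega

lemma Wd_congr {ω ω' : ℕ → List ℕ} (i : ℕ) (h : ∀ j < i, ω j = ω' j) : Wd ω i = Wd ω' i := by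
  induction i with
  | zero => rfl
  | succ i ih =>
    simp only [Wd]
    rw [ih (fun j hj => h j (by omega)), h i (by omega)]

lemma cfm_continuousOn {w : List ℕ} (hw : PosW w) : ContinuousOn (cfm w) (Icc 0 1) := by
  induction w with
  | nil => exact continuousOn_id
  | cons a w ih =>
    have ha : (1:ℝ) ≤ a := by exact_mod_cast (PosW.cons_iff.1 hw).1
    have h := ih (PosW.cons_iff.1 hw).2
    refine ContinuousOn.div continuousOn_const (continuousOn_const.add h) ?_
    intro θ hθ
    have := cfm_nonneg w hθ.1
    linarith

lemma exists_point {ω : ℕ → List ℕ} (h : ∀ i, PosW (ω i)) :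
    ∃ x : ℝ, ∀ i, ∃ θ ∈ Icc (0:ℝ) 1, x = cfm (Wd ω i) θ := by
  have hc : ∀ i, IsCompact (cfm (Wd ω i) '' Icc 0 1) := fun i =>
    isCompact_Icc.image_of_continuousOn (cfm_continuousOn (Wd_pos h i))
  obtain ⟨x, hx⟩ := IsCompact.nonempty_iInter_of_sequence_nonempty_isCompact_isClosed
    (fun i => cfm (Wd ω i) '' Icc 0 1) (by
      rintro i _ ⟨θ, hθ, rfl⟩
      refine ⟨cfm (ω i) θ, cfm_mem (h i) hθ, ?_⟩
      simp only [Wd, cfm_append]) (fun i => ⟨_, ⟨0, by simp, rfl⟩⟩) (hc 0) (fun i => (hc i).isClosed)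
  refine ⟨x, fun i => ?_⟩
  obtain ⟨θ, hθ, e⟩ := mem_iInter.1 hx i
  exact ⟨θ, hθ, e.symm⟩

lemma point_tendsto {ω : ℕ → List ℕ} (h : ∀ i, PosW (ω i)) (h' : ∀ i, ω i ≠ []) {x : ℝ}
    (hx : ∀ i, ∃ θ ∈ Icc (0:ℝ) 1, x = cfm (Wd ω i) θ) :
    Tendsto (fun i => cfm (Wd ω i) 0) atTop (nhds x) := by
  rw [tendsto_iff_dist_tendsto_zero]
  have h2 : Tendsto (fun i : ℕ => 2 * (1/2:ℝ) ^ i) atTop (nhds 0) := by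
    simpa using (tendsto_pow_atTop_nhds_zero_of_lt_one (r := (1/2:ℝ)) (by norm_num)
      (by norm_num)).const_mul 2
  refine squeeze_zero (fun _ => dist_nonneg) (fun i => ?_) h2
  obtain ⟨θ, hθ, e⟩ := hx i
  rw [e, Real.dist_eq]
  have hw := Wd_pos h i
  have g := cfD_growth hw
  have g1 : (2:ℝ) ^ i ≤ 2 ^ (Wd ω i).length := pow_le_pow_right₀ (by norm_num) (Wd_length h' i)
  refine (cfm_dist_le hw le_rfl hθ.1).trans ?_
  have hD := one_le_cfD hw (le_refl (0:ℝ))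
  rw [div_le_iff₀ (by positivity), one_div, inv_pow]
  have h3 : |0 - θ| ≤ 1 := by rw [abs_le]; constructor <;> linarith [hθ.1, hθ.2]
  have h4 : (0:ℝ) < 2 ^ i := by positivity
  have h5 : 1 ≤ 2 * ((2:ℝ) ^ i)⁻¹ * cfD (Wd ω i) 0 ^ 2 := by
    have : 2 * ((2:ℝ) ^ i)⁻¹ * cfD (Wd ω i) 0 ^ 2 = (2 * cfD (Wd ω i) 0 ^ 2) / 2 ^ i := by
      field_simp
    rw [this, one_le_div h4]; linarith
  linarith

lemma mass_le {p : ℕ → List ℕ → ℝ} {ρ : ℕ → ℝ} {s : ℝ} (hs : 0 < s) (hp0 : ∀ i w, 0 ≤ p i w)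
    (ω : ℕ → List ℕ) (h : ∀ i, PosW (ω i)) (hρ0 : 1 ≤ ρ 0)
    (hstep : ∀ i, ρ i * p i (ω i) * (2 * cfD (ω i) 0) ^ (2 * s) ≤ ρ (i+1)) (i : ℕ) :
    (∏ j ∈ Finset.range i, p j (ω j)) * (cfD (Wd ω i) 0) ^ (2 * s) ≤ ρ i := by
  induction i with
  | zero => simpa [Wd, cfD] using hρ0
  | succ i ih =>
    refine le_trans ?_ (hstep i)
    rw [Finset.prod_range_succ]
    have hW := Wd_pos h i
    have h1 := cfD_append_le hW (h i)
    have hD1 := one_le_cfD hW (le_refl (0:ℝ))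
    have hD2 := one_le_cfD (h i) (le_refl (0:ℝ))
    have hD3 := one_le_cfD (PosW.append_iff.2 ⟨hW, h i⟩) (le_refl (0:ℝ))
    have h2 : (cfD (Wd ω (i+1)) 0) ^ (2*s) ≤
        (cfD (Wd ω i) 0) ^ (2*s) * (2 * cfD (ω i) 0) ^ (2*s) := by
      rw [← Real.mul_rpow (by linarith) (by linarith)]
      simp only [Wd]
      exact Real.rpow_le_rpow (by linarith) (by linarith) (by linarith)
    have hP : 0 ≤ ∏ j ∈ Finset.range i, p j (ω j) := Finset.prod_nonneg (fun j _ => hp0 _ _)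
    calc _ ≤ (∏ j ∈ Finset.range i, p j (ω j)) * p i (ω i) *
          ((cfD (Wd ω i) 0) ^ (2*s) * (2 * cfD (ω i) 0) ^ (2*s)) := by
            have := hp0 i (ω i)
            gcongr
      _ = ((∏ j ∈ Finset.range i, p j (ω j)) * (cfD (Wd ω i) 0) ^ (2*s)) *
          (p i (ω i) * (2 * cfD (ω i) 0) ^ (2*s)) := by ring
      _ ≤ ρ i * (p i (ω i) * (2 * cfD (ω i) 0) ^ (2*s)) := by
            have := hp0 i (ω i)
            gcongr
      _ = _ := by ring

noncomputable instance listMS : MeasurableSpace (List ℕ) := ⊤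

instance listDMS : DiscreteMeasurableSpace (List ℕ) := ⟨fun _ => trivial⟩

/-- one-step measure -/
noncomputable def stepM (S : Finset (List ℕ)) (p : List ℕ → ℝ) : Measure S :=
  ∑ w : S, ENNReal.ofReal (p w) • Measure.dirac w

lemma stepM_apply (S : Finset (List ℕ)) (p : List ℕ → ℝ) (hp : ∀ w, 0 ≤ p w) (R : Finset (List ℕ))
    (hR : R ⊆ S) : stepM S p {w : S | w.1 ∈ R} = ENNReal.ofReal (∑ w ∈ R, p w) := by
  classical
  rw [stepM, Measure.finsetSum_apply, ENNReal.ofReal_sum_of_nonneg (fun w _ => hp w)]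
  simp only [Measure.smul_apply, smul_eq_mul]
  have : ∀ w : S, ENNReal.ofReal (p w) * Measure.dirac w {w : S | w.1 ∈ R} =
      if w.1 ∈ R then ENNReal.ofReal (p w) else 0 := by
    intro w
    rw [Measure.dirac_apply' _ (MeasurableSet.of_discrete)]
    by_cases h : w.1 ∈ R <;> simp [Set.indicator, h]
  simp only [this]
  rw [Finset.sum_coe_sort S (fun w => if w ∈ R then ENNReal.ofReal (p w) else 0),
    ← Finset.sum_filter]
  congr 1
  ext w; simp only [Finset.mem_filter]
  exact ⟨fun h => h.2, fun h => ⟨hR h, h⟩⟩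

lemma stepM_prob (S : Finset (List ℕ)) (p : List ℕ → ℝ) (hp : ∀ w, 0 ≤ p w)
    (h1 : ∑ w ∈ S, p w = 1) : IsProbabilityMeasure (stepM S p) := by
  constructor
  have := stepM_apply S p hp S subset_rfl
  rw [h1] at this
  rw [← ENNReal.ofReal_one, ← this]
  congr 1
  ext w; simp

theorem abstract_lower (S : ℕ → Finset (List ℕ)) (p : ℕ → List ℕ → ℝ) (ρ : ℕ → ℝ) (s C : ℝ)
    (hs : 0 < s) (hC : 0 < C)
    (hS : ∀ i, ∀ w ∈ S i, PosW w ∧ w ≠ []) (hp0 : ∀ i w, 0 ≤ p i w)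
    (hp1 : ∀ i, ∑ w ∈ S i, p i w = 1) (hρ0 : 1 ≤ ρ 0)
    (hstep : ∀ i, ∀ w ∈ S i, ρ i * p i w * (2 * cfD w 0) ^ (2 * s) ≤ ρ (i+1))
    (hρC : ∀ i, ρ i ≤ C)
    (hsep : ∀ i, ∀ R ⊆ S i, (∃ d ∈ R, ∃ d' ∈ R, d ≠ d') → ∃ d ∈ R, ∃ d' ∈ R,
      ∀ θ ∈ Icc (0:ℝ) 1, ∀ θ' ∈ Icc (0:ℝ) 1,
        ρ i * ∑ w ∈ R, p i w ≤ C * |cfm d θ - cfm d' θ'| ^ s)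
    (F : Set ℝ)
    (hF : ∀ ω : ℕ → List ℕ, (∀ i, ω i ∈ S i) → ∀ x : ℝ,
      (∀ i, ∃ θ ∈ Icc (0:ℝ) 1, x = cfm (Wd ω i) θ) → x ∈ F) :
    ENNReal.ofReal s ≤ dimH F := by
  classical
  have hprob : ∀ i, IsProbabilityMeasure (stepM (S i) (p i)) :=
    fun i => stepM_prob _ _ (hp0 i) (hp1 i)
  let P : Measure (∀ i, S i) := Measure.infinitePi (fun i => stepM (S i) (p i))
  have hpw : ∀ (ω : ∀ i, S i) i, PosW (ω i).1 := fun ω i => (hS i _ (ω i).2).1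
  have hne : ∀ (ω : ∀ i, S i) i, (ω i).1 ≠ [] := fun ω i => (hS i _ (ω i).2).2
  choose π hπ using fun ω : (∀ i, S i) => exists_point (ω := fun i => (ω i).1) (hpw ω)
  have hW : ∀ i, Measurable (fun ω : (∀ i, S i) => Wd (fun i => (ω i).1) i) := by
    intro i
    induction i with
    | zero => exact measurable_const
    | succ i ih =>
      have h2 : Measurable (fun ω : (∀ i, S i) => (ω i).1) :=
        measurable_subtype_coe.comp (measurable_pi_apply i)
      exact (Measurable.of_discrete (f := fun q : List ℕ × List ℕ => q.1 ++ q.2)).comp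
        (ih.prodMk h2)
  have hπm : Measurable π := by
    refine measurable_of_tendsto_metrizable (f := fun i ω => cfm (Wd (fun i => (ω i).1) i) 0) ?_ ?_
    · intro i
      exact (Measurable.of_discrete (f := fun w : List ℕ => cfm w 0)).comp (hW i)
    · rw [tendsto_pi_nhds]
      intro ω
      exact point_tendsto (hpw ω) (hne ω) (hπ ω)
  have hcyl : ∀ (ω₀ : ∀ i, S i) (i : ℕ) (R : Finset (List ℕ)), R ⊆ S i →
      P {ω | (∀ j < i, ω j = ω₀ j) ∧ (ω i).1 ∈ R} =
        ENNReal.ofReal ((∏ j ∈ Finset.range i, p j (ω₀ j).1) * ∑ w ∈ R, p i w) := by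
    intro ω₀ i R hR
    let R' : ∀ j, Finset (List ℕ) := fun j => if j < i then {(ω₀ j).1} else if j = i then R else ∅
    have hR' : ∀ j, R' j ⊆ S j := by
      intro j
      simp only [R']
      split_ifs with h1 h2
      · simp
      · subst h2; exact hR
      · simp
    have e : {ω : (∀ i, S i) | (∀ j < i, ω j = ω₀ j) ∧ (ω i).1 ∈ R} =
        (Set.pi (Finset.range (i+1) : Set ℕ) (fun j => {w : S j | w.1 ∈ R' j})) := by
      ext ω
      simp only [Set.mem_ofPred_eq, Set.mem_pi, Finset.coe_range, Set.mem_Iio]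
      constructor
      · rintro ⟨h1, h2⟩ j hj
        rcases Nat.lt_succ_iff_lt_or_eq.1 hj with h | h
        · simp [R', h, h1 j h]
        · subst h; simpa [R'] using h2
      · intro h
        refine ⟨fun j hj => ?_, ?_⟩
        · have := h j (by omega)
          simp only [R', hj, if_true, Finset.mem_singleton] at this
          exact Subtype.ext this
        · have := h i (by omega)
          simpa [R'] using this
    rw [e]
    simp only [P]
    rw [Measure.infinitePi_pi _ (fun _ _ => MeasurableSet.of_discrete)]
    rw [Finset.prod_congr rfl (fun j _ => stepM_apply (S j) (p j) (hp0 j) (R' j) (hR' j)),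
      ← ENNReal.ofReal_prod_of_nonneg (fun j _ => Finset.sum_nonneg (fun w _ => hp0 j w)),
      Finset.prod_range_succ]
    congr 2
    · refine Finset.prod_congr rfl (fun j hj => ?_)
      simp only [R', Finset.mem_range.1 hj, if_true, Finset.sum_singleton]
    · simp [R']
  have key : ∀ E : Set ℝ, P (π ⁻¹' E) ≤ ENNReal.ofReal (C * 4 ^ s) * Metric.ediam E ^ s := by
    intro E
    have hmass : ∀ (ω : ∀ i, S i) i, (∏ j ∈ Finset.range i, p j (ω j).1) *
        (cfD (Wd (fun i => (ω i).1) i) 0) ^ (2 * s) ≤ ρ i := fun ω i =>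
      mass_le hs hp0 (fun i => (ω i).1) (hpw ω) hρ0 (fun i => hstep i _ (ω i).2) i
    by_cases hsub : (π ⁻¹' E).Subsingleton
    · rcases hsub.eq_empty_or_singleton with h | ⟨ω, h⟩
      · rw [h]; simp
      · rw [h]
        have hz : P {ω} = 0 := by
          have hb : ∀ i : ℕ, P {ω} ≤ ENNReal.ofReal (C * ((2 * (1/2:ℝ) ^ i)) ^ s) := by
            intro i
            have hsubset : ({ω} : Set (∀ i, S i)) ⊆
                {ω' | (∀ j < i, ω' j = ω j) ∧ (ω' i).1 ∈ S i} := by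
              intro ω' h'; rw [Set.mem_singleton_iff.1 h']; exact ⟨fun _ _ => rfl, (ω i).2⟩
            refine (measure_mono hsubset).trans ?_
            rw [hcyl ω i (S i) subset_rfl, hp1, mul_one]
            apply ENNReal.ofReal_le_ofReal
            have hw := Wd_pos (ω := fun i => (ω i).1) (hpw ω) i
            have g := cfD_growth hw
            have g1 : (2:ℝ) ^ i ≤ 2 ^ (Wd (fun i => (ω i).1) i).length :=
              pow_le_pow_right₀ (by norm_num) (Wd_length (hne ω) i)
            have hm := (hmass ω i).trans (hρC i)
            have hD := one_le_cfD hw (le_refl (0:ℝ))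
            set D := cfD (Wd (fun i => (ω i).1) i) 0
            have hD' : (0:ℝ) < D ^ (2*s) := by positivity
            rw [← le_div_iff₀ hD'] at hm
            refine hm.trans ?_
            rw [div_eq_mul_inv, Real.rpow_mul (by positivity), Real.rpow_two, ← Real.inv_rpow (by positivity)]
            gcongr
            rw [inv_le_iff_one_le_mul₀ (by positivity), one_div, inv_pow]
            have h4 : (0:ℝ) < 2 ^ i := by positivity
            have : 2 * ((2:ℝ) ^ i)⁻¹ * D ^ 2 = (2 * D ^ 2) / 2 ^ i := by field_simp
            rw [this, one_le_div h4]; linarith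
          have hlim : Tendsto (fun i : ℕ => ENNReal.ofReal (C * ((2 * (1/2:ℝ) ^ i)) ^ s)) atTop
              (nhds 0) := by
            have h2 : Tendsto (fun i : ℕ => 2 * (1/2:ℝ) ^ i) atTop (nhds 0) := by
              simpa using (tendsto_pow_atTop_nhds_zero_of_lt_one (r := (1/2:ℝ)) (by norm_num)
                (by norm_num)).const_mul 2
            have h3 := (h2.rpow_const (p := s) (Or.inr hs.le)).const_mul C
            rw [Real.zero_rpow hs.ne', mul_zero] at h3
            have h4 := (ENNReal.continuous_ofReal.tendsto 0).comp h3
            rw [ENNReal.ofReal_zero] at h4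
            exact h4
          exact le_antisymm (ge_of_tendsto' hlim hb) zero_le
        rw [hz]; exact zero_le
    · rw [Set.not_subsingleton_iff] at hsub
      have hex : ∃ i, ∃ ω ∈ π ⁻¹' E, ∃ ω' ∈ π ⁻¹' E, ω i ≠ ω' i := by
        obtain ⟨ω, h1, ω', h2, h3⟩ := hsub
        obtain ⟨i, hi⟩ := Function.ne_iff.1 h3
        exact ⟨i, ω, h1, ω', h2, hi⟩
      let i := Nat.find hex
      obtain ⟨ω₁, hω₁, ω₂, hω₂, hd⟩ := Nat.find_spec hex
      have hag : ∀ ω ∈ π ⁻¹' E, ∀ j < i, ω j = ω₁ j := by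
        intro ω hω j hj
        by_contra hcon
        exact Nat.find_min hex hj ⟨ω, hω, ω₁, hω₁, hcon⟩
      let R : Finset (List ℕ) := (S i).filter (fun w => ∃ ω ∈ π ⁻¹' E, (ω i).1 = w)
      have hRS : R ⊆ S i := Finset.filter_subset _ _
      have hmemR : ∀ ω ∈ π ⁻¹' E, (ω i).1 ∈ R := fun ω hω =>
        Finset.mem_filter.2 ⟨(ω i).2, ω, hω, rfl⟩
      obtain ⟨d, hdR, d', hdR', hgap⟩ := hsep i R hRS
        ⟨_, hmemR ω₁ hω₁, _, hmemR ω₂ hω₂, fun h => hd (Subtype.ext h)⟩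
      obtain ⟨-, ω, hω, rfl⟩ := Finset.mem_filter.1 hdR
      obtain ⟨-, ω', hω', rfl⟩ := Finset.mem_filter.1 hdR'
      have hle : P (π ⁻¹' E) ≤
          ENNReal.ofReal ((∏ j ∈ Finset.range i, p j (ω₁ j).1) * ∑ w ∈ R, p i w) := by
        rw [← hcyl ω₁ i R hRS]
        exact measure_mono (fun ω hω => ⟨hag ω hω, hmemR ω hω⟩)
      refine hle.trans ?_
      obtain ⟨θ, hθ, e⟩ := hπ ω (i+1)
      obtain ⟨θ', hθ', e'⟩ := hπ ω' (i+1)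
      have hWeq : ∀ ω ∈ π ⁻¹' E, Wd (fun i => (ω i).1) i = Wd (fun i => (ω₁ i).1) i :=
        fun ω hω => Wd_congr i (fun j hj => by rw [hag ω hω j hj])
      simp only [Wd, cfm_append] at e e'
      rw [hWeq ω hω] at e
      rw [hWeq ω' hω'] at e'
      have hw := Wd_pos (ω := fun i => (ω₁ i).1) (hpw ω₁) i
      have hdist := le_cfm_dist hw (cfm_mem (hpw ω i) hθ) (cfm_mem (hpw ω' i) hθ')
      rw [← e, ← e'] at hdist
      have hg := hgap θ hθ θ' hθ'
      have hm := hmass ω₁ i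
      have hD := one_le_cfD hw (le_refl (0:ℝ))
      set D := cfD (Wd (fun i => (ω₁ i).1) i) 0
      set δ := |cfm (ω i).1 θ - cfm (ω' i).1 θ'|
      have hδ : 0 ≤ δ := abs_nonneg _
      have hD' : (0:ℝ) < D ^ (2*s) := by positivity
      have hsum : 0 ≤ ∑ w ∈ R, p i w := Finset.sum_nonneg (fun w _ => hp0 i w)
      have hreal : (∏ j ∈ Finset.range i, p j (ω₁ j).1) * ∑ w ∈ R, p i w ≤
          (C * 4 ^ s) * |π ω - π ω'| ^ s := by
        have h1 : (δ / (4 * D ^ 2)) ^ s ≤ |π ω - π ω'| ^ s :=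
          Real.rpow_le_rpow (by positivity) hdist hs.le
        have h2 : (δ / (4 * D ^ 2)) ^ s = δ ^ s / (4 ^ s * D ^ (2 * s)) := by
          rw [Real.div_rpow hδ (by positivity), Real.mul_rpow (by norm_num) (by positivity),
            Real.rpow_mul (by positivity), Real.rpow_two]
        have h3 : (∏ j ∈ Finset.range i, p j (ω₁ j).1) * ∑ w ∈ R, p i w ≤ C * δ ^ s / D ^ (2*s) := by
          rw [le_div_iff₀ hD']
          calc _ = ((∏ j ∈ Finset.range i, p j (ω₁ j).1) * D ^ (2*s)) * ∑ w ∈ R, p i w := by ring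
            _ ≤ ρ i * ∑ w ∈ R, p i w := by gcongr
            _ ≤ _ := hg
        refine h3.trans ?_
        calc C * δ ^ s / D ^ (2*s) = (C * 4 ^ s) * (δ ^ s / (4 ^ s * D ^ (2 * s))) := by
              have : (0:ℝ) < 4 ^ s := by positivity
              field_simp
          _ ≤ _ := by rw [← h2]; gcongr
      refine (ENNReal.ofReal_le_ofReal hreal).trans ?_
      rw [ENNReal.ofReal_mul (by positivity), ← ENNReal.ofReal_rpow_of_nonneg (abs_nonneg _) hs.le]
      gcongr
      rw [← Real.dist_eq, ← edist_dist]
      exact Metric.edist_le_ediam_of_mem hω hω'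
  have hK0 : ENNReal.ofReal (C * 4 ^ s) ≠ 0 := by
    have : (0:ℝ) < C * 4 ^ s := by positivity
    simpa using this
  have hKt : ENNReal.ofReal (C * 4 ^ s) ≠ ⊤ := ENNReal.ofReal_ne_top
  set K := ENNReal.ofReal (C * 4 ^ s)
  have hle : K⁻¹ • (P.map π) ≤ Measure.hausdorffMeasure s := by
    refine Measure.le_hausdorffMeasure s _ 1 one_pos (fun E _ => ?_)
    rw [Measure.smul_apply, smul_eq_mul]
    have h1 : P.map π E ≤ K * Metric.ediam E ^ s := by
      refine (measure_mono subset_closure).trans ?_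
      rw [Measure.map_apply hπm isClosed_closure.measurableSet]
      refine (key _).trans ?_
      rw [Metric.ediam_closure]
    calc K⁻¹ * P.map π E ≤ K⁻¹ * (K * Metric.ediam E ^ s) := by gcongr
      _ = _ := by rw [← mul_assoc, ENNReal.inv_mul_cancel hK0 hKt, one_mul]
  have hFfull : P.map π F ≠ 0 := by
    have h1 : P (π ⁻¹' F) = 1 := by
      have : π ⁻¹' F = univ := by
        ext ω; simp only [mem_preimage, mem_univ, iff_true]
        exact hF _ (fun i => (ω i).2) _ (hπ ω)
      rw [this]
      have : IsProbabilityMeasure P := by simp only [P]; infer_instance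
      exact measure_univ
    have h2 := Measure.le_map_apply hπm.aemeasurable F (μ := P)
    rw [h1] at h2
    intro h0; rw [h0] at h2; simp at h2
  have hne0 : Measure.hausdorffMeasure s F ≠ 0 := by
    have h1 := hle F
    rw [Measure.smul_apply, smul_eq_mul] at h1
    intro h0
    rw [h0] at h1
    have h2 := le_antisymm h1 zero_le
    rcases mul_eq_zero.1 h2 with h | h
    · exact hKt (by simpa using h)
    · exact hFfull h
  have := le_dimH_of_hausdorffMeasure_ne_zero (d := s.toNNReal) (s := F)
    (by rw [Real.coe_toNNReal s hs.le]; exact hne0)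
  exact this


/-! ### Pressure sums -/

noncomputable def Zp (B s : ℝ) (n : ℕ) : ENNReal :=
  ∑' a : Fin n → ℕ+, ENNReal.ofReal (B ^ (-(n : ℝ) * s ^ 2) *
          ((contQ n fun i => (a i : ℕ)) : ℝ) ^ (-(2 * s)))

noncomputable def Zq (s : ℝ) (n : ℕ) : ENNReal :=
  ∑' a : Fin n → ℕ+, ENNReal.ofReal (cfD (List.ofFn (fun i => (a i : ℕ))) 0 ^ (-(2 * s)))

lemma Zp_eq {B : ℝ} (hB : 1 < B) (s : ℝ) (n : ℕ) :
    Zp B s n = ENNReal.ofReal (B ^ (-(n : ℝ) * s ^ 2)) * Zq s n := by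
  rw [Zp, Zq, ← ENNReal.tsum_mul_left]
  congr 1; funext a
  rw [contQ_eq, ENNReal.ofReal_mul (by positivity)]

lemma press_le {Z : ENNReal} {n : ℕ} (hn : 0 < n) {c : ℝ} (h : Z ≤ ENNReal.ofReal (Real.exp (c * n))) :
    (((n : ℝ)⁻¹ : ℝ) : EReal) * ENNReal.log Z ≤ c := by
  have h1 : ENNReal.log Z ≤ ((c * n : ℝ) : EReal) := by
    refine (ENNReal.log_monotone h).trans ?_
    rw [ENNReal.log_ofReal, if_neg (not_le.2 (Real.exp_pos _)), Real.log_exp]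
  have h0 : (0:EReal) ≤ (((n : ℝ)⁻¹ : ℝ) : EReal) := by
    exact_mod_cast (by positivity : (0:ℝ) ≤ (n:ℝ)⁻¹)
  refine (mul_le_mul_of_nonneg_left h1 h0).trans ?_
  rw [← EReal.coe_mul]
  have : (n:ℝ)⁻¹ * (c * n) = c := by
    have : (n:ℝ) ≠ 0 := by positivity
    field_simp
  rw [this]

lemma le_press {Z : ENNReal} {n : ℕ} (hn : 0 < n) {c : ℝ} (h : ENNReal.ofReal (Real.exp (c * n)) ≤ Z) :
    (c : EReal) ≤ (((n : ℝ)⁻¹ : ℝ) : EReal) * ENNReal.log Z := by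
  have h1 : ((c * n : ℝ) : EReal) ≤ ENNReal.log Z := by
    refine le_trans ?_ (ENNReal.log_monotone h)
    rw [ENNReal.log_ofReal, if_neg (not_le.2 (Real.exp_pos _)), Real.log_exp]
  have h0 : (0:EReal) ≤ (((n : ℝ)⁻¹ : ℝ) : EReal) := by
    exact_mod_cast (by positivity : (0:ℝ) ≤ (n:ℝ)⁻¹)
  refine le_trans ?_ (mul_le_mul_of_nonneg_left h1 h0)
  rw [← EReal.coe_mul]
  have : (n:ℝ)⁻¹ * (c * n) = c := by
    have : (n:ℝ) ≠ 0 := by positivity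
    field_simp
  rw [this]

/-- telescoping -/
lemma tele_sum {q q' : ℝ} (hq : 1 ≤ q) (hq' : 0 ≤ q') :
    ∑' a : ℕ+, ENNReal.ofReal (1 / (((a:ℕ) * q + q') * (((a:ℕ) + 1) * q + q'))) ≤
      ENNReal.ofReal (1 / (q * (q + q'))) := by
  rw [tsum_pnat_eq_tsum_succ (f := fun a : ℕ => ENNReal.ofReal (1 / ((a * q + q') * ((a + 1) * q + q'))))]
  rw [ENNReal.tsum_eq_iSup_nat]
  refine iSup_le (fun N => ?_)
  rw [← ENNReal.ofReal_sum_of_nonneg (fun i _ => by positivity)]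
  apply ENNReal.ofReal_le_ofReal
  have : ∑ k ∈ Finset.range N, 1 / ((((k+1:ℕ):ℝ) * q + q') * ((((k+1:ℕ):ℝ) + 1) * q + q')) =
      1 / (q * (q + q')) - 1 / (q * ((N + 1) * q + q')) := by
    induction N with
    | zero => simp
    | succ N ih =>
      rw [Finset.sum_range_succ, ih]
      push_cast
      have h1 : ((N:ℝ) + 1) * q + q' ≠ 0 := by positivity
      have h2 : ((N:ℝ) + 1 + 1) * q + q' ≠ 0 := by positivity
      have h3 : q ≠ 0 := by positivity
      have h4 : q + q' ≠ 0 := by positivity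
      field_simp
      ring
  rw [this]
  have : 0 ≤ 1 / (q * ((N + 1) * q + q')) := by positivity
  linarith

lemma ofFn_snoc {n : ℕ} (w : Fin n → ℕ+) (a : ℕ+) :
    List.ofFn (fun i : Fin (n+1) => ((Fin.snoc (α := fun _ => ℕ+) w a i : ℕ+) : ℕ)) =
      List.ofFn (fun i => (w i : ℕ)) ++ [(a : ℕ)] := by
  rw [List.ofFn_succ', List.concat_eq_append]
  simp

lemma sum_len (n : ℕ) : ∑' a : Fin n → ℕ+, ENNReal.ofReal
    (1 / (cfD (List.ofFn (fun i => (a i : ℕ))) 0 * cfD (List.ofFn (fun i => (a i : ℕ))) 1)) ≤ 1 := by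
  induction n with
  | zero => simp [cfD]
  | succ n ih =>
    refine le_trans ?_ ih
    rw [← (Fin.snocEquiv (fun _ : Fin (n+1) => ℕ+)).tsum_eq, ENNReal.tsum_prod', ENNReal.tsum_comm]
    refine ENNReal.tsum_le_tsum (fun w => ?_)
    have hw := PosW.ofFn w
    obtain ⟨q', h0, h1, h2⟩ := cfD_affine hw
    have hq := one_le_cfD hw (le_refl (0:ℝ))
    set W := List.ofFn (fun i => (w i : ℕ))
    rw [h2 1 zero_le_one, one_mul]
    refine le_trans (le_of_eq ?_) (tele_sum hq h0)
    congr 1; funext a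
    have e : List.ofFn (fun i => (((Fin.snocEquiv (fun _ : Fin (n+1) => ℕ+)) (a, w) i : ℕ+) : ℕ)) =
      W ++ [(a:ℕ)] := ofFn_snoc w a
    rw [e]
    have ha : (1:ℝ) ≤ (a:ℕ) := by exact_mod_cast a.2
    have key : ∀ θ : ℝ, 0 ≤ θ → cfD (W ++ [(a:ℕ)]) θ = ((a:ℕ) + θ) * cfD W 0 + q' := by
      intro θ hθ
      rw [cfD_append]
      simp only [cfm, cfD]
      rw [h2 _ (by positivity)]
      have : ((a:ℕ):ℝ) + θ ≠ 0 := by linarith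
      field_simp
    rw [key 0 le_rfl, key 1 zero_le_one, add_zero]

lemma Zq_one (n : ℕ) : Zq 1 n ≤ 2 := by
  have h : Zq 1 n ≤ ∑' a : Fin n → ℕ+, ENNReal.ofReal 2 * ENNReal.ofReal
    (1 / (cfD (List.ofFn (fun i => (a i : ℕ))) 0 * cfD (List.ofFn (fun i => (a i : ℕ))) 1)) := by
    refine ENNReal.tsum_le_tsum (fun w => ?_)
    rw [← ENNReal.ofReal_mul (by norm_num)]
    apply ENNReal.ofReal_le_ofReal
    have hw := PosW.ofFn w
    have h1 := one_le_cfD hw (le_refl (0:ℝ))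
    have h2 := one_le_cfD hw (zero_le_one)
    have h3 := cfD_le hw (θ := 1) (by simp)
    rw [Real.rpow_neg (by positivity), mul_one, Real.rpow_two, ← one_div, mul_one_div,
      div_le_div_iff₀ (by positivity) (by positivity)]
    nlinarith
  refine h.trans ?_
  rw [ENNReal.tsum_mul_left]
  calc ENNReal.ofReal 2 * _ ≤ ENNReal.ofReal 2 * 1 := by gcongr; exact sum_len n
    _ = 2 := by simp

def tSet (B : ℝ) : Set ℝ := {s : ℝ | 0 ≤ s ∧
    Filter.atTop.limsup (fun n : ℕ =>
      (((n : ℝ)⁻¹ : ℝ) : EReal) * ENNReal.log (Zp B s n)) ≤ 0}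

lemma tExp_eq (B : ℝ) : tExp B = sInf (tSet B) := rfl

lemma one_mem_tSet {B : ℝ} (hB : 1 < B) : (1:ℝ) ∈ tSet B := by
  refine ⟨zero_le_one, ?_⟩
  refine limsup_le_of_le (by isBoundedDefault) ?_
  have h : ∀ᶠ n : ℕ in atTop, 2 ≤ B ^ n :=
    (tendsto_pow_atTop_atTop_of_one_lt hB).eventually_ge_atTop 2
  filter_upwards [h, eventually_gt_atTop 0] with n hn hn0
  have := press_le (Z := Zp B 1 n) hn0 (c := 0) (by
    rw [zero_mul, Real.exp_zero, ENNReal.ofReal_one, Zp_eq hB]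
    calc _ ≤ ENNReal.ofReal (B ^ (-(n : ℝ) * 1 ^ 2)) * ENNReal.ofReal 2 := by
          gcongr; simpa using Zq_one n
      _ ≤ 1 := by
          rw [← ENNReal.ofReal_mul (by positivity), ← ENNReal.ofReal_one]
          apply ENNReal.ofReal_le_ofReal
          rw [one_pow, mul_one, Real.rpow_neg (by positivity), Real.rpow_natCast,
            inv_mul_le_iff₀ (by positivity)]
          linarith)
  exact_mod_cast this

lemma tExp_le_one {B : ℝ} (hB : 1 < B) : tExp B ≤ 1 :=
  csInf_le ⟨0, fun _ h => h.1⟩ (one_mem_tSet hB)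

lemma tExp_nonneg (B : ℝ) : 0 ≤ tExp B := Real.sInf_nonneg (fun _ h => h.1)

lemma Zp_decay {B s : ℝ} (hB : 1 < B) (hs : tExp B < s) : ∃ c : ℝ, 0 < c ∧
    ∀ᶠ n : ℕ in atTop, Zp B s n ≤ ENNReal.ofReal (Real.exp (-c * n)) := by
  obtain ⟨s₀, ⟨h0, h1⟩, h2⟩ := exists_lt_of_csInf_lt ⟨1, one_mem_tSet hB⟩ hs
  have hlog : 0 < Real.log B := Real.log_pos hB
  have hs2 : 0 < s ^ 2 - s₀ ^ 2 := by nlinarith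
  set c := (s ^ 2 - s₀ ^ 2) * Real.log B / 2 with hc
  have hc0 : 0 < c := by positivity
  refine ⟨c, hc0, ?_⟩
  have h3 := eventually_lt_of_limsup_lt (lt_of_le_of_lt h1 (by exact_mod_cast hc0 : (0:EReal) < (c:EReal)))
  filter_upwards [h3, eventually_gt_atTop 0] with n hn hn0
  have h4 : Zp B s₀ n ≤ ENNReal.ofReal (Real.exp (c * n)) := by
    by_contra hcon
    exact absurd (le_press hn0 (not_le.1 hcon).le) (not_le.2 hn)
  have h5 : Zp B s n ≤ ENNReal.ofReal (Real.exp (-(2 * c) * n)) * Zp B s₀ n := by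
    rw [Zp, Zp, ← ENNReal.tsum_mul_left]
    refine ENNReal.tsum_le_tsum (fun w => ?_)
    rw [contQ_eq]
    have h1 := one_le_cfD (PosW.ofFn w) (le_refl (0:ℝ))
    rw [← ENNReal.ofReal_mul (by positivity)]
    apply ENNReal.ofReal_le_ofReal
    rw [← mul_assoc]
    have e : Real.exp (-(2 * c) * n) * B ^ (-(n:ℝ) * s₀ ^ 2) = B ^ (-(n:ℝ) * s ^ 2) := by
      rw [Real.rpow_def_of_pos (by linarith), Real.rpow_def_of_pos (by linarith), ← Real.exp_add]
      congr 1; rw [hc]; ring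
    rw [e]
    have hle : -(2 * s) ≤ -(2 * s₀) := by linarith
    gcongr
  refine h5.trans ?_
  calc _ ≤ ENNReal.ofReal (Real.exp (-(2 * c) * n)) * ENNReal.ofReal (Real.exp (c * n)) := by gcongr
    _ = _ := by
      rw [← ENNReal.ofReal_mul (by positivity), ← Real.exp_add]; congr 2; ring

/-! ### Upper bound -/

lemma ediam_cyl {w : List ℕ} (hw : PosW w) {r : ℝ} :
    Metric.ediam (cfm w '' Icc 0 r) ≤ ENNReal.ofReal (r / (cfD w 0) ^ 2) := by
  refine Metric.ediam_le ?_
  rintro _ ⟨θ, hθ, rfl⟩ _ ⟨θ', hθ', rfl⟩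
  rw [edist_dist, Real.dist_eq]
  apply ENNReal.ofReal_le_ofReal
  refine (cfm_dist_le hw hθ.1 hθ'.1).trans ?_
  gcongr
  rw [abs_le]; constructor <;> linarith [hθ.1, hθ.2, hθ'.1, hθ'.2]

lemma sum_rpow {s X : ℝ} (hs : 0 < s) (hs1 : s < 1) (hX : 0 ≤ X) :
    ∑' k : ℕ, ENNReal.ofReal (if ((k+1:ℕ):ℝ) < X then ((k+1:ℕ):ℝ) ^ (-s) else 0) ≤
      ENNReal.ofReal (X ^ (1 - s) / (1 - s)) := by
  rw [ENNReal.tsum_eq_iSup_nat]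
  refine iSup_le (fun N => ?_)
  rw [← ENNReal.ofReal_sum_of_nonneg (fun i _ => by split_ifs <;> positivity)]
  apply ENNReal.ofReal_le_ofReal
  have h1s : 0 < 1 - s := by linarith
  have main : ∑ k ∈ Finset.range N, (if ((k+1:ℕ):ℝ) < X then ((k+1:ℕ):ℝ) ^ (-s) else 0) ≤
      (min (N:ℝ) X) ^ (1 - s) / (1 - s) := by
    induction N with
    | zero => simp [hX, Real.zero_rpow h1s.ne']
    | succ N ih =>
      rw [Finset.sum_range_succ]
      have hN : (0:ℝ) ≤ N := by positivity
      split_ifs with h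
      · have hNX : (N:ℝ) ≤ X := by push_cast at h; linarith
        rw [min_eq_left hNX] at ih
        rw [min_eq_left h.le]
        have hb := rpow_one_add_le_one_add_mul_self (s := -(1/((N:ℝ)+1))) (p := 1 - s)
          (by rw [neg_le_neg_iff, div_le_one (by positivity)]; linarith) h1s.le (by linarith)
        have e1 : 1 + -(1/((N:ℝ)+1)) = N / (N+1) := by field_simp; ring
        rw [e1, Real.div_rpow hN (by positivity), div_le_iff₀ (by positivity)] at hb
        push_cast
        have e2 : ((N:ℝ)+1) ^ (-s) = ((N:ℝ)+1) ^ (1-s) * (1/((N:ℝ)+1)) := by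
          rw [show -s = (1 - s) - 1 by ring, Real.rpow_sub_one (by positivity)]; ring
        rw [e2]
        have e3 : (N:ℝ) ^ (1-s) ≤ (1 - (1-s) * (1/((N:ℝ)+1))) * ((N:ℝ)+1) ^ (1-s) := by linarith
        calc _ ≤ (1 - (1-s) * (1/((N:ℝ)+1))) * ((N:ℝ)+1) ^ (1-s) / (1 - s)
              + ((N:ℝ)+1) ^ (1-s) * (1/((N:ℝ)+1)) := by
                have ih' := ih.trans (div_le_div_of_nonneg_right e3 h1s.le)
                push_cast at ih'
                gcongr
          _ = _ := by field_simp; ring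
      · rw [add_zero]
        refine ih.trans ?_
        gcongr
        simp
  refine main.trans ?_
  gcongr
  exact min_le_right _ _

/-- the set of the theorem -/
def FB (B : ℝ) : Set ℝ := {x : ℝ | x ∈ Set.Ioo (0 : ℝ) 1 ∧ Irrational x ∧
      {n : ℕ | B ^ n ≤ (pq x n : ℝ) * (pq x (n + 1) : ℝ)}.Infinite ∧
      (∀ᶠ n : ℕ in Filter.atTop, (pq x (n + 1) : ℝ) < B ^ n)}

noncomputable def cov (B s : ℝ) (m : ℕ) (w : Fin m → ℕ+) : ℕ → Set ℝ
  | 0 => cfm (List.ofFn (fun i => (w i : ℕ))) '' Icc 0 (B ^ (-(s * (m+1))))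
  | u + 1 => if ((u+1:ℕ):ℝ) < B ^ (s * (m+1)) then
      cfm (List.ofFn (fun i => (w i : ℕ)) ++ [u+1]) '' Icc 0 (((u+1:ℕ):ℝ) / B ^ (m+1)) else ∅

lemma cov_zero {B s : ℝ} (hB : 1 < B) (m : ℕ) (w : Fin m → ℕ+) :
    Metric.ediam (cov B s m w 0) ≤
      ENNReal.ofReal (B ^ (-(s * (m+1))) * ((cfD (List.ofFn (fun i => (w i : ℕ))) 0) ^ 2)⁻¹) := by
  exact ediam_cyl (PosW.ofFn w)

lemma cov_succ {B s : ℝ} (hB : 1 < B) (m : ℕ) (w : Fin m → ℕ+) (u : ℕ) :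
    Metric.ediam (cov B s m w (u+1)) ≤
      ENNReal.ofReal (if ((u+1:ℕ):ℝ) < B ^ (s * (m+1)) then (B ^ (-((m:ℝ)+1)) *
        ((cfD (List.ofFn (fun i => (w i : ℕ))) 0) ^ 2)⁻¹ * ((u+1:ℕ):ℝ)⁻¹) else 0) := by
  simp only [cov]
  split_ifs with h
  · have hw := PosW.ofFn w
    have hu : PosW [u+1] := by intro a ha; simp at ha; omega
    refine (ediam_cyl (PosW.append_iff.2 ⟨hw, hu⟩)).trans ?_
    apply ENNReal.ofReal_le_ofReal
    have h1 := le_cfD_append hw hu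
    have h2 := one_le_cfD hw (le_refl (0:ℝ))
    have h3 : cfD [u+1] 0 = ((u+1:ℕ):ℝ) := by simp [cfD, cfm]
    rw [h3] at h1
    set D := cfD (List.ofFn (fun i => (w i : ℕ))) 0
    have hu0 : (0:ℝ) < ((u+1:ℕ):ℝ) := by positivity
    calc _ ≤ (((u+1:ℕ):ℝ) / B ^ (m+1)) / (D * ((u+1:ℕ):ℝ)) ^ 2 := by gcongr
      _ = _ := by
        rw [Real.rpow_neg (by positivity)]
        have : B ^ ((m:ℝ)+1) = B ^ (m+1) := by
          rw [← Real.rpow_natCast]; push_cast; rfl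
        rw [this]
        field_simp
  · simp

lemma cov_sum {B s : ℝ} (hB : 1 < B) (hs : 0 < s) (hs1 : s < 1) (m : ℕ) (w : Fin m → ℕ+) :
    ∑' u, Metric.ediam (cov B s m w u) ^ s ≤
      ENNReal.ofReal (1 + 1 / (1 - s)) * (ENNReal.ofReal (B ^ (-(m:ℝ) * s ^ 2)) *
        ENNReal.ofReal (cfD (List.ofFn (fun i => (w i : ℕ))) 0 ^ (-(2 * s)))) := by
  have h1 := one_le_cfD (PosW.ofFn w) (le_refl (0:ℝ))
  have h1s : 0 < 1 - s := by linarith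
  rw [tsum_eq_zero_add' ENNReal.summable]
  have z0 := cov_zero (s := s) hB m w
  have z1 := cov_succ (s := s) hB m w
  set D := cfD (List.ofFn (fun i => (w i : ℕ))) 0
  have hDs : ((D ^ 2)⁻¹) ^ s = D ^ (-(2*s)) := by
    rw [Real.inv_rpow (by positivity), ← Real.rpow_two, ← Real.rpow_mul (by positivity),
      Real.rpow_neg (by positivity)]
  have hBm : B ^ (-(s^2 * (m+1))) ≤ B ^ (-(m:ℝ) * s^2) := by
    apply Real.rpow_le_rpow_of_exponent_le hB.le
    nlinarith [sq_nonneg s]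
  have a0 : Metric.ediam (cov B s m w 0) ^ s ≤ ENNReal.ofReal (B ^ (-(m:ℝ) * s^2) * D ^ (-(2*s))) := by
    refine (ENNReal.rpow_le_rpow z0 hs.le).trans ?_
    rw [ENNReal.ofReal_rpow_of_nonneg (by positivity) hs.le]
    apply ENNReal.ofReal_le_ofReal
    rw [Real.mul_rpow (by positivity) (by positivity), hDs, ← Real.rpow_mul (by positivity)]
    rw [show -(s * ((m:ℝ)+1)) * s = -(s^2 * (m+1)) by ring]
    gcongr
  have a1 : ∑' u, Metric.ediam (cov B s m w (u+1)) ^ s ≤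
      ENNReal.ofReal (1/(1-s) * (B ^ (-(m:ℝ) * s^2) * D ^ (-(2*s)))) := by
    calc _ ≤ ∑' u : ℕ, ENNReal.ofReal (B ^ (-(s*((m:ℝ)+1))) * D ^ (-(2*s))) *
          ENNReal.ofReal (if ((u+1:ℕ):ℝ) < B ^ (s * (m+1)) then ((u+1:ℕ):ℝ) ^ (-s) else 0) := by
            refine ENNReal.tsum_le_tsum (fun u => ?_)
            refine (ENNReal.rpow_le_rpow (z1 u) hs.le).trans ?_
            rw [ENNReal.ofReal_rpow_of_nonneg (by split_ifs <;> positivity) hs.le,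
              ← ENNReal.ofReal_mul (by positivity)]
            apply ENNReal.ofReal_le_ofReal
            split_ifs with h
            · rw [Real.mul_rpow (by positivity) (by positivity),
                Real.mul_rpow (by positivity) (by positivity), hDs, ← Real.rpow_mul (by positivity),
                Real.inv_rpow (by positivity), ← Real.rpow_neg (by positivity)]
              rw [show -((m:ℝ)+1) * s = -(s * (m+1)) by ring]
            · rw [Real.zero_rpow hs.ne', mul_zero]
      _ ≤ ENNReal.ofReal (B ^ (-(s*((m:ℝ)+1))) * D ^ (-(2*s))) *
          ENNReal.ofReal ((B ^ (s * ((m:ℝ)+1))) ^ (1 - s) / (1 - s)) := by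
            rw [ENNReal.tsum_mul_left]
            gcongr
            exact sum_rpow hs hs1 (by positivity)
      _ ≤ _ := by
        rw [← ENNReal.ofReal_mul (by positivity)]
        apply ENNReal.ofReal_le_ofReal
        rw [← Real.rpow_mul (by positivity)]
        have : B ^ (-(s*((m:ℝ)+1))) * B ^ (s * ((m:ℝ)+1) * (1-s)) = B ^ (-(s^2 * (m+1))) := by
          rw [← Real.rpow_add (by positivity)]; congr 1; ring
        calc _ = 1/(1-s) * ((B ^ (-(s*((m:ℝ)+1))) * B ^ (s * ((m:ℝ)+1) * (1-s))) * D ^ (-(2*s))) := by ring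
          _ ≤ _ := by rw [this]; gcongr
  refine (add_le_add a0 a1).trans ?_
  rw [← ENNReal.ofReal_add (by positivity) (by positivity), ← ENNReal.ofReal_mul (by positivity),
    ← ENNReal.ofReal_mul (by positivity)]
  apply ENNReal.ofReal_le_ofReal
  apply le_of_eq; ring

lemma cov_small {B s : ℝ} (hB : 1 < B) (hs : 0 < s) (hs1 : s < 1) (N m : ℕ) (hm : N ≤ m)
    (w : Fin m → ℕ+) (u : ℕ) :
    Metric.ediam (cov B s m w u) ≤ ENNReal.ofReal (B ^ (-s * N)) := by
  have h1 := one_le_cfD (PosW.ofFn w) (le_refl (0:ℝ))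
  have hm' : (N:ℝ) ≤ m := by exact_mod_cast hm
  have hD : ((cfD (List.ofFn (fun i => (w i : ℕ))) 0) ^ 2)⁻¹ ≤ 1 := by
    apply inv_le_one_of_one_le₀; nlinarith
  cases u with
  | zero =>
    refine (cov_zero hB m w).trans (ENNReal.ofReal_le_ofReal ?_)
    calc _ ≤ B ^ (-(s * ((m:ℝ)+1))) * 1 := by gcongr
      _ ≤ _ := by
        rw [mul_one]
        apply Real.rpow_le_rpow_of_exponent_le hB.le
        nlinarith
  | succ u =>
    refine (cov_succ hB m w u).trans (ENNReal.ofReal_le_ofReal ?_)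
    split_ifs
    · have h2 : (((u+1:ℕ):ℝ))⁻¹ ≤ 1 := by
        apply inv_le_one_of_one_le₀; push_cast; linarith [show (0:ℝ) ≤ u by positivity]
      calc _ ≤ B ^ (-((m:ℝ)+1)) * 1 * 1 := by gcongr
        _ ≤ _ := by
          rw [mul_one, mul_one]
          apply Real.rpow_le_rpow_of_exponent_le hB.le
          nlinarith [show (0:ℝ) ≤ N by positivity]
    · positivity

lemma FB_cover {B s : ℝ} (hB : 1 < B) (N : ℕ) :
    FB B ⊆ ⋃ i : (Σ k : ℕ, (Fin (N+k) → ℕ+) × ℕ), cov B s (N + i.1) i.2.1 i.2.2 := by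
  rintro x ⟨hx, hi, hinf, -⟩
  obtain ⟨n, hn, hnN⟩ := hinf.exists_gt N
  obtain ⟨m, rfl⟩ : ∃ m, n = m + 1 := ⟨n - 1, by omega⟩
  obtain ⟨k, rfl⟩ := Nat.exists_eq_add_of_le (show N ≤ m by omega)
  have hn : B ^ (N+k+1) ≤ (pq x (N+k+1) : ℝ) * (pq x (N+k+1+1) : ℝ) := hn
  obtain ⟨h1, h2, h3, h4⟩ := irr_expand (N+k) hx hi
  obtain ⟨g1, g2, g3, g4⟩ := irr_expand (N+k+1) hx hi
  let w : Fin (N+k) → ℕ+ := fun i => ⟨pq x (i+1), h3 i i.2⟩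
  have hwe : (List.ofFn (fun i => (w i : ℕ))) = List.ofFn (fun i : Fin (N+k) => pq x (i+1)) := rfl
  have f1 : (pq x (N+k+1) : ℝ) ≤ 1 / gaussMap^[N+k] x := by
    apply Nat.floor_le; have := h1.1; positivity
  have f2 : (pq x (N+k+1+1) : ℝ) ≤ 1 / gaussMap^[N+k+1] x := by
    apply Nat.floor_le; have := g1.1; positivity
  have p1 : (1:ℝ) ≤ pq x (N+k+1) := by exact_mod_cast g3 (N+k) (by omega)
  rw [mem_iUnion]
  by_cases hcase : (pq x (N+k+1) : ℝ) < B ^ (s * (((N+k:ℕ):ℝ)+1))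
  · obtain ⟨u, hu⟩ : ∃ u, pq x (N+k+1) = u + 1 := ⟨pq x (N+k+1) - 1, by
      have := g3 (N+k) (by omega); omega⟩
    refine ⟨⟨k, w, u+1⟩, ?_⟩
    simp only [cov]
    rw [← hu, if_pos hcase]
    refine ⟨gaussMap^[N+k+1] x, ⟨g1.1.le, ?_⟩, ?_⟩
    · rw [le_div_iff₀ (by positivity)]
      have hg := g1.1
      rw [le_div_iff₀ hg] at f2
      calc gaussMap^[N+k+1] x * B ^ (N+k+1) ≤
            gaussMap^[N+k+1] x * ((pq x (N+k+1) : ℝ) * (pq x (N+k+1+1) : ℝ)) := by gcongr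
        _ = (pq x (N+k+1) : ℝ) * ((pq x (N+k+1+1) : ℝ) * gaussMap^[N+k+1] x) := by ring
        _ ≤ (pq x (N+k+1) : ℝ) * 1 := by gcongr
        _ = _ := mul_one _
    · rw [hwe]
      conv_rhs => rw [g4]
      rw [List.ofFn_succ', List.concat_eq_append]
      simp
  · refine ⟨⟨k, w, 0⟩, ?_⟩
    simp only [cov]
    refine ⟨gaussMap^[N+k] x, ⟨h1.1.le, ?_⟩, h4.symm⟩
    rw [not_lt] at hcase
    have hg := h1.1
    have := hcase.trans f1
    rw [Real.rpow_neg (by positivity), ← one_div, le_div_iff₀ (by positivity)]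
    rw [le_div_iff₀ hg] at this
    linarith

theorem upper_bound {B s : ℝ} (hB : 1 < B) (hs : tExp B < s) (hs1 : s < 1) :
    dimH (FB B) ≤ ENNReal.ofReal s := by
  have hs0 : 0 < s := (tExp_nonneg B).trans_lt hs
  obtain ⟨c, hc, hdec⟩ := Zp_decay hB hs
  obtain ⟨N₀, hN₀⟩ := eventually_atTop.1 hdec
  have hfin : Measure.hausdorffMeasure s (FB B) ≤
      ENNReal.ofReal (1 + 1 / (1 - s)) * ENNReal.ofReal (∑' k : ℕ, (Real.exp (-c)) ^ k) := by
    refine (Measure.hausdorffMeasure_le_liminf_tsum (l := atTop)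
      (ι := fun N : ℕ => (Σ k : ℕ, (Fin (N+k) → ℕ+) × ℕ)) s (FB B)
      (fun N => ENNReal.ofReal (B ^ (-s * N))) ?_ (fun N i => cov B s (N + i.1) i.2.1 i.2.2)
      (Eventually.of_forall fun N i => cov_small hB hs0 hs1 N _ (by omega) _ _)
      (Eventually.of_forall fun N => FB_cover hB N)).trans ?_
    · have h1 : Tendsto (fun N : ℕ => (B ^ (-s)) ^ N) atTop (nhds 0) :=
        tendsto_pow_atTop_nhds_zero_of_lt_one (by positivity)
          (Real.rpow_lt_one_of_one_lt_of_neg hB (by linarith))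
      have h2 := (ENNReal.continuous_ofReal.tendsto 0).comp h1
      rw [ENNReal.ofReal_zero] at h2
      refine h2.congr (fun N => ?_)
      simp only [Function.comp]
      rw [Real.rpow_mul (by positivity), Real.rpow_natCast]
    · refine (liminf_le_liminf (v := fun _ => ENNReal.ofReal (1 + 1 / (1 - s)) *
        ENNReal.ofReal (∑' k : ℕ, (Real.exp (-c)) ^ k)) ?_).trans (liminf_const _).le
      filter_upwards [eventually_ge_atTop N₀] with N hN
      rw [ENNReal.tsum_sigma']
      have hsm : Summable (fun k : ℕ => (Real.exp (-c)) ^ k) :=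
        summable_geometric_of_lt_one (by positivity) (by rw [Real.exp_lt_one_iff]; linarith)
      rw [ENNReal.ofReal_tsum_of_nonneg (fun k => by positivity) hsm, ← ENNReal.tsum_mul_left]
      refine ENNReal.tsum_le_tsum (fun k => ?_)
      rw [ENNReal.tsum_prod']
      calc _ ≤ ∑' w : Fin (N+k) → ℕ+, ENNReal.ofReal (1 + 1 / (1 - s)) *
              (ENNReal.ofReal (B ^ (-((N+k:ℕ):ℝ) * s ^ 2)) *
              ENNReal.ofReal (cfD (List.ofFn (fun i => (w i : ℕ))) 0 ^ (-(2 * s)))) :=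
            ENNReal.tsum_le_tsum (fun w => cov_sum hB hs0 hs1 (N+k) w)
        _ = ENNReal.ofReal (1 + 1 / (1 - s)) * Zp B s (N+k) := by
            rw [ENNReal.tsum_mul_left, ENNReal.tsum_mul_left, Zp_eq hB, Zq]
        _ ≤ _ := by
            gcongr
            refine (hN₀ (N+k) (by omega)).trans (ENNReal.ofReal_le_ofReal ?_)
            rw [← Real.exp_nat_mul]
            apply Real.exp_le_exp.2
            push_cast
            nlinarith [show (0:ℝ) ≤ N by positivity]
  have := dimH_le_of_hausdorffMeasure_ne_top (d := s.toNNReal) (s := FB B) (by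
    rw [Real.coe_toNNReal s hs0.le]
    exact ne_top_of_le_ne_top (ENNReal.mul_ne_top ENNReal.ofReal_ne_top ENNReal.ofReal_ne_top) hfin)
  exact this

lemma upper_final {B : ℝ} (hB : 1 < B) : dimH (FB B) ≤ ENNReal.ofReal (tExp B) := by
  refine le_of_forall_gt_imp_ge_of_dense (fun b hb => ?_)
  by_cases h1 : 1 ≤ b
  · refine le_trans ?_ h1
    refine (dimH_mono (subset_univ _)).trans ?_
    rw [Real.dimH_univ]
  · rw [not_le] at h1
    have hbt : b ≠ ⊤ := ne_top_of_lt h1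
    have h2 := upper_bound hB (s := b.toReal)
      (by rwa [ENNReal.ofReal_lt_iff_lt_toReal (tExp_nonneg B) hbt] at hb)
      (by rw [← ENNReal.toReal_one]; exact (ENNReal.toReal_lt_toReal hbt (by simp)).2 h1)
    rwa [ENNReal.ofReal_toReal hbt] at h2


/-! ### Lower bound -/

lemma cfD_nonneg (w : List ℕ) : 0 ≤ cfD w 0 := by
  induction w with
  | nil => simp [cfD]
  | cons a w ih =>
    have := cfm_nonneg w (le_refl (0:ℝ))
    simp only [cfD]; positivity

lemma exists_block_sum {B s : ℝ} (hB : 1 < B) (hs : 0 < s) (hst : s < tExp B) (K : ℝ) :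
    ∃ n : ℕ, 0 < n ∧ ∃ T : Finset (Fin n → ℕ+),
      K * B ^ ((n:ℝ) * s ^ 2) < ∑ a ∈ T, cfD (List.ofFn (fun i => (a i : ℕ))) 0 ^ (-(2 * s)) := by
  have hns : s ∉ tSet B := fun h => absurd (csInf_le ⟨0, fun _ h => h.1⟩ h) (not_le.2 hst)
  have hlim : ¬ Filter.atTop.limsup (fun n : ℕ =>
      (((n : ℝ)⁻¹ : ℝ) : EReal) * ENNReal.log (Zp B s n)) ≤ 0 := fun h => hns ⟨hs.le, h⟩
  rw [not_le] at hlim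
  obtain ⟨c, hc0, hc⟩ := EReal.lt_iff_exists_real_btwn.1 hlim
  have hc0 : 0 < c := by exact_mod_cast hc0
  have hfr := frequently_lt_of_lt_limsup (by isBoundedDefault) hc
  have hev : ∀ᶠ n : ℕ in atTop, K ≤ Real.exp (c * n) := by
    have h1 : Tendsto (fun n : ℕ => Real.exp (c * n)) atTop atTop :=
      Real.tendsto_exp_atTop.comp (tendsto_natCast_atTop_atTop.const_mul_atTop hc0)
    exact h1.eventually_ge_atTop K
  obtain ⟨n, hn, hK, hn0⟩ := (hfr.and_eventually (hev.and (eventually_gt_atTop 0))).exists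
  refine ⟨n, hn0, ?_⟩
  have h1 : ENNReal.ofReal (Real.exp (c * n)) < Zp B s n := by
    by_contra hcon
    exact absurd (press_le hn0 (not_lt.1 hcon)) (not_le.2 hn)
  have h2 : ENNReal.ofReal (K * B ^ ((n:ℝ) * s ^ 2)) < Zq s n := by
    have hBp : (0:ℝ) < B ^ ((n:ℝ) * s^2) := by positivity
    have e : ENNReal.ofReal (B ^ ((n:ℝ) * s^2)) * Zp B s n = Zq s n := by
      rw [Zp_eq hB, ← mul_assoc, ← ENNReal.ofReal_mul hBp.le, ← Real.rpow_add (by positivity)]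
      have : (n:ℝ) * s^2 + -(n:ℝ) * s^2 = 0 := by ring
      rw [this]; simp
    rw [← e, mul_comm K, ENNReal.ofReal_mul hBp.le]
    refine lt_of_le_of_lt (mul_le_mul_right (ENNReal.ofReal_le_ofReal hK) _) ?_
    exact (ENNReal.mul_lt_mul_iff_right (by simpa using hBp) ENNReal.ofReal_ne_top).2 h1
  rw [Zq, ENNReal.tsum_eq_iSup_sum] at h2
  obtain ⟨T, hT⟩ := lt_iSup_iff.1 h2
  refine ⟨T, ?_⟩
  rw [← ENNReal.ofReal_sum_of_nonneg (fun a _ => Real.rpow_nonneg (cfD_nonneg _) _)] at hT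
  exact (ENNReal.ofReal_lt_ofReal_iff').1 hT |>.1

lemma exists_blocks {B s : ℝ} (hB : 1 < B) (hs : 0 < s) (hst : s < tExp B) :
    ∃ (ℓ : ℕ) (A : Finset (List ℕ)) (M : ℕ) (κ : ℝ), 0 < ℓ ∧ 0 < κ ∧
      (∀ w ∈ A, PosW w ∧ w.length = ℓ ∧ ∀ a ∈ w, a ≤ M) ∧
      (2:ℝ) ^ (2 * s) * B ^ (s ^ 2 * (ℓ + 1)) ≤ ∑ w ∈ A, cfD w 0 ^ (-(2 * s)) ∧
      ∀ d ∈ A, ∀ d' ∈ A, d ≠ d' → ∀ θ ∈ Icc (0:ℝ) 1, ∀ θ' ∈ Icc (0:ℝ) 1,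
        κ ≤ |cfm d θ - cfm d' θ'| := by
  classical
  obtain ⟨n, hn, T, hT⟩ := exists_block_sum hB hs hst
    ((4:ℝ) ^ (2 * s) * (2:ℝ) ^ (2 * s) * B ^ (2 * s ^ 2))
  let f : (Fin n → ℕ+) → List ℕ := fun a => List.ofFn (fun i => (a i : ℕ)) ++ [2]
  have hf : Function.Injective f := by
    intro a b hab
    have h1 := List.append_cancel_right hab
    have h2 := List.ofFn_injective h1
    funext i
    exact PNat.coe_injective (congrFun h2 i)
  have h2pos : PosW [2] := by intro a ha; simp at ha; omega
  have hgap : ∀ d ∈ T.image f, ∀ d' ∈ T.image f, d ≠ d' →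
      ∃ κ > 0, ∀ θ ∈ Icc (0:ℝ) 1, ∀ θ' ∈ Icc (0:ℝ) 1, κ ≤ |cfm d θ - cfm d' θ'| := by
    intro d hd d' hd' hne
    obtain ⟨a, -, rfl⟩ := Finset.mem_image.1 hd
    obtain ⟨b, -, rfl⟩ := Finset.mem_image.1 hd'
    have hP : ∀ a, PosW (f a) := fun a => PosW.append_iff.2 ⟨PosW.ofFn a, h2pos⟩
    have hc : ContinuousOn (fun q : ℝ × ℝ => |cfm (f a) q.1 - cfm (f b) q.2|)
        (Icc (0:ℝ) 1 ×ˢ Icc (0:ℝ) 1) := by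
      refine ContinuousOn.abs (ContinuousOn.sub ?_ ?_)
      · exact (cfm_continuousOn (hP a)).comp continuousOn_fst (fun q hq => hq.1)
      · exact (cfm_continuousOn (hP b)).comp continuousOn_snd (fun q hq => hq.2)
    obtain ⟨q, hq, hmin⟩ := (isCompact_Icc.prod isCompact_Icc).exists_isMinOn
      ⟨((0:ℝ),(0:ℝ)), by simp⟩ hc
    refine ⟨_, ?_, fun θ hθ θ' hθ' => hmin (a := (θ, θ')) ⟨hθ, hθ'⟩⟩
    have h2 : ∀ θ ∈ Icc (0:ℝ) 1, cfm [2] θ ∈ Ioo (0:ℝ) 1 := by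
      intro θ hθ
      simp only [cfm]
      have := hθ.1
      refine ⟨by positivity, ?_⟩
      rw [div_lt_one (by positivity)]; push_cast; linarith
    have hab : List.ofFn (fun i => (a i : ℕ)) ≠ List.ofFn (fun i => (b i : ℕ)) := by
      intro h; apply hne; simp only [f, h]
    have := cfm_ne (PosW.ofFn a) (PosW.ofFn b) (by simp) hab (h2 _ hq.1) (h2 _ hq.2)
    rw [← cfm_append, ← cfm_append] at this
    exact abs_pos.2 (sub_ne_zero.2 this)
  have hgap' : ∃ κ > 0, ∀ d ∈ T.image f, ∀ d' ∈ T.image f, d ≠ d' →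
      ∀ θ ∈ Icc (0:ℝ) 1, ∀ θ' ∈ Icc (0:ℝ) 1, κ ≤ |cfm d θ - cfm d' θ'| := by
    have h : ∀ᶠ κ in nhdsWithin (0:ℝ) (Ioi 0), ∀ d ∈ T.image f, ∀ d' ∈ T.image f, d ≠ d' →
        ∀ θ ∈ Icc (0:ℝ) 1, ∀ θ' ∈ Icc (0:ℝ) 1, κ ≤ |cfm d θ - cfm d' θ'| := by
      rw [Filter.eventually_all_finset]
      intro d hd
      rw [Filter.eventually_all_finset]
      intro d' hd'
      by_cases hne : d = d'
      · exact Eventually.of_forall (fun κ h => absurd hne h)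
      · obtain ⟨κ₀, hκ₀, h⟩ := hgap d hd d' hd' hne
        filter_upwards [Ioc_mem_nhdsGT hκ₀] with κ hκ _ θ hθ θ' hθ'
        exact hκ.2.trans (h θ hθ θ' hθ')
    obtain ⟨κ, h1, h2⟩ := (h.and self_mem_nhdsWithin).exists
    exact ⟨κ, h2, h1⟩
  obtain ⟨κ, hκ, hsep⟩ := hgap'
  refine ⟨n + 1, T.image f, ((T.image f).sup (fun w => w.sum)), κ, by omega, hκ, ?_, ?_, hsep⟩
  · intro w hw
    refine ⟨?_, ?_, ?_⟩
    · obtain ⟨a, -, rfl⟩ := Finset.mem_image.1 hw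
      exact PosW.append_iff.2 ⟨PosW.ofFn a, h2pos⟩
    · obtain ⟨a, -, rfl⟩ := Finset.mem_image.1 hw
      simp [f]
    · intro a ha
      exact (List.le_sum_of_mem ha).trans (Finset.le_sup (f := fun w : List ℕ => w.sum) hw)
  · rw [Finset.sum_image (fun a _ b _ h => hf h)]
    have h1 : ∀ a ∈ T, (4:ℝ) ^ (-(2*s)) * cfD (List.ofFn (fun i => (a i : ℕ))) 0 ^ (-(2 * s)) ≤
        cfD (f a) 0 ^ (-(2*s)) := by
      intro a _
      have hD := one_le_cfD (PosW.ofFn a) (le_refl (0:ℝ))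
      have hD2 := one_le_cfD (PosW.append_iff.2 ⟨PosW.ofFn a, h2pos⟩) (le_refl (0:ℝ))
      have hle := cfD_append_le (PosW.ofFn a) h2pos
      have e2 : cfD [2] 0 = 2 := by simp [cfD, cfm]
      rw [e2] at hle
      rw [← Real.mul_rpow (by norm_num) (by linarith)]
      apply Real.rpow_le_rpow_of_nonpos (by simp only [f]; linarith) (by simp only [f]; linarith)
      linarith
    refine le_trans ?_ (Finset.sum_le_sum h1)
    rw [← Finset.mul_sum]
    have h4 : (4:ℝ) ^ (-(2*s)) * (4:ℝ) ^ (2*s) = 1 := by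
      rw [← Real.rpow_add (by norm_num)]; simp
    have hBe : B ^ (2 * s^2) * B ^ ((n:ℝ) * s^2) = B ^ (s^2 * (((n+1:ℕ):ℝ) + 1)) := by
      rw [← Real.rpow_add (by positivity)]; congr 1; push_cast; ring
    calc (2:ℝ) ^ (2 * s) * B ^ (s ^ 2 * (((n+1:ℕ):ℝ) + 1))
        = ((4:ℝ) ^ (-(2*s)) * (4:ℝ) ^ (2*s)) * ((2:ℝ) ^ (2 * s) * (B ^ (2 * s^2) * B ^ ((n:ℝ) * s^2))) := by
          rw [h4, hBe, one_mul]
      _ = (4:ℝ) ^ (-(2*s)) * ((4:ℝ) ^ (2 * s) * (2:ℝ) ^ (2 * s) * B ^ (2 * s ^ 2) * B ^ ((n:ℝ) * s^2)) := by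
          ring
      _ ≤ _ := by gcongr

/-! #### single digit steps -/

def digS (U : ℕ) : Finset (List ℕ) := (Finset.range U).image (fun j => [2 * (U + j)])

lemma mem_digS {U : ℕ} {w : List ℕ} : w ∈ digS U ↔ ∃ j < U, w = [2 * (U + j)] := by
  simp only [digS, Finset.mem_image, Finset.mem_range]
  constructor
  · rintro ⟨j, h, rfl⟩; exact ⟨j, h, rfl⟩
  · rintro ⟨j, h, rfl⟩; exact ⟨j, h, rfl⟩

lemma digS_inj (U : ℕ) : Function.Injective (fun j : ℕ => [2 * (U + j)]) := by
  intro a b h; simp at h; omega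

lemma digS_card (U : ℕ) : (digS U).card = U := by
  rw [digS, Finset.card_image_of_injective _ (digS_inj U), Finset.card_range]

lemma dig_step {U : ℕ} {X s : ℝ} (hs : 0 < s) (hX : 1 ≤ X) (h1 : X ≤ U) (h2 : U ≤ 2 * X) {w : List ℕ}
    (hw : w ∈ digS U) : (U:ℝ)⁻¹ * (2 * cfD w 0) ^ (2 * s) ≤ 16 ^ (2 * s) * X ^ (2 * s - 1) := by
  obtain ⟨j, hj, rfl⟩ := mem_digS.1 hw
  have hj' : (j:ℝ) ≤ U := by exact_mod_cast hj.le
  have e : cfD [2 * (U + j)] 0 = 2 * ((U:ℝ) + j) := by simp [cfD, cfm]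
  rw [e, Real.rpow_sub_one (by positivity)]
  have : (2 * (2 * ((U:ℝ) + j))) ^ (2*s) ≤ (16 * X) ^ (2*s) :=
    Real.rpow_le_rpow (by positivity) (by linarith) (by linarith)
  rw [Real.mul_rpow (x := 16) (y := X) (by norm_num) (by positivity)] at this
  have hinv : (U:ℝ)⁻¹ ≤ X⁻¹ := inv_anti₀ (by positivity) h1
  calc _ ≤ X⁻¹ * (16 ^ (2*s) * X ^ (2*s)) := by gcongr
    _ = _ := by field_simp

lemma dig_sep {U : ℕ} {s : ℝ} (hs : 0 < s) (hs1 : s < 1) (R : Finset (List ℕ)) (hR : R ⊆ digS U)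
    (hne : ∃ d ∈ R, ∃ d' ∈ R, d ≠ d') : ∃ d ∈ R, ∃ d' ∈ R,
      ∀ θ ∈ Icc (0:ℝ) 1, ∀ θ' ∈ Icc (0:ℝ) 1,
        ∑ _w ∈ R, (U:ℝ)⁻¹ ≤ 2 * 16 ^ s * (U:ℝ) ^ s * |cfm d θ - cfm d' θ'| ^ s := by
  classical
  let J := (Finset.range U).filter (fun j => [2 * (U + j)] ∈ R)
  have hRJ : R = J.image (fun j => [2 * (U + j)]) := by
    ext w
    simp only [J, Finset.mem_image, Finset.mem_filter, Finset.mem_range]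
    constructor
    · intro hw
      obtain ⟨j, hj, rfl⟩ := mem_digS.1 (hR hw)
      exact ⟨j, ⟨hj, hw⟩, rfl⟩
    · rintro ⟨j, ⟨_, h⟩, rfl⟩; exact h
  have hcard : R.card = J.card := by
    rw [hRJ, Finset.card_image_of_injective _ (digS_inj U)]
  obtain ⟨d, hd, d', hd', hdd⟩ := hne
  have hJne : J.Nonempty := by
    rw [hRJ] at hd
    obtain ⟨j, hj, -⟩ := Finset.mem_image.1 hd
    exact ⟨j, hj⟩
  have hJ2 : 1 < J.card := by
    rw [← hcard]; exact Finset.one_lt_card.2 ⟨d, hd, d', hd', hdd⟩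
  set a := J.min' hJne with ha
  set b := J.max' hJne with hb
  have hab : a < b := Finset.min'_lt_max'_of_card J hJ2
  have haJ := Finset.mem_filter.1 (J.min'_mem hJne)
  have hbJ := Finset.mem_filter.1 (J.max'_mem hJne)
  have hJsub : J ⊆ Finset.Icc a b := fun j hj =>
    Finset.mem_Icc.2 ⟨J.min'_le j hj, J.le_max' j hj⟩
  have hJc : J.card ≤ 2 * (b - a) := by
    have := Finset.card_le_card hJsub
    rw [Nat.card_Icc] at this
    omega
  have hbU : b < U := Finset.mem_range.1 hbJ.1
  refine ⟨_, haJ.2, _, hbJ.2, fun θ hθ θ' hθ' => ?_⟩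
  rw [← ha, ← hb]
  rw [Finset.sum_const, nsmul_eq_mul, hcard]
  have hU : (0:ℝ) < U := by exact_mod_cast (by omega : 0 < U)
  have hbU' : (b:ℝ) + 1 ≤ U := by exact_mod_cast hbU
  have hab' : (a:ℝ) + 1 ≤ b := by exact_mod_cast hab
  have ha0 : (0:ℝ) ≤ a := by positivity
  set δ : ℝ := (b:ℝ) - a with hδ
  have hδ1 : 1 ≤ δ := by linarith
  have hJc' : (J.card : ℝ) ≤ 2 * δ := by
    have : (J.card : ℝ) ≤ ((2 * (b - a) : ℕ) : ℝ) := by exact_mod_cast hJc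
    rw [Nat.cast_mul, Nat.cast_sub hab.le] at this
    simpa using this
  have hdist : δ / (16 * (U:ℝ)^2) ≤ |cfm [2 * (U + a)] θ - cfm [2 * (U + b)] θ'| := by
    simp only [cfm]
    push_cast
    have p1 : 0 < 2 * ((U:ℝ) + a) + θ := by linarith [hθ.1]
    have p2 : 0 < 2 * ((U:ℝ) + b) + θ' := by linarith [hθ'.1]
    have e : 1 / (2 * ((U:ℝ) + a) + θ) - 1 / (2 * ((U:ℝ) + b) + θ') =
        (2 * δ + θ' - θ) / ((2 * ((U:ℝ) + a) + θ) * (2 * ((U:ℝ) + b) + θ')) := by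
      rw [hδ]; field_simp; ring
    rw [e]
    refine le_trans ?_ (le_abs_self _)
    have q1 : 2 * ((U:ℝ) + a) + θ ≤ 4 * U := by linarith [hθ.2]
    have q2 : 2 * ((U:ℝ) + b) + θ' ≤ 4 * U := by linarith [hθ'.2]
    have q3 : (2 * ((U:ℝ) + a) + θ) * (2 * ((U:ℝ) + b) + θ') ≤ 16 * (U:ℝ)^2 := by
      calc _ ≤ (4 * (U:ℝ)) * (4 * U) := by gcongr
        _ = _ := by ring
    have q4 : δ ≤ 2 * δ + θ' - θ := by linarith [hθ.2, hθ'.1]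
    have q5 : 0 ≤ 2 * δ + θ' - θ := by linarith
    gcongr
  have hpow : (δ / (16 * (U:ℝ)^2)) ^ s ≤ |cfm [2 * (U + a)] θ - cfm [2 * (U + b)] θ'| ^ s :=
    Real.rpow_le_rpow (by positivity) hdist hs.le
  have hδU : δ / U ≤ (δ / U) ^ s := by
    have h1 : δ / U ≤ 1 := by rw [div_le_one hU]; linarith
    calc δ / U = (δ / U) ^ (1:ℝ) := (Real.rpow_one _).symm
      _ ≤ _ := Real.rpow_le_rpow_of_exponent_ge (by positivity) h1 hs1.le
  have heq : (δ / U) ^ s = 16 ^ s * (U:ℝ) ^ s * (δ / (16 * (U:ℝ)^2)) ^ s := by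
    rw [← Real.mul_rpow (by norm_num) (by positivity), ← Real.mul_rpow (by positivity) (by positivity)]
    congr 1; field_simp
  calc (J.card : ℝ) * (U:ℝ)⁻¹ ≤ 2 * δ * (U:ℝ)⁻¹ := by gcongr
    _ = 2 * (δ / U) := by ring
    _ ≤ 2 * (δ / U) ^ s := by gcongr
    _ = 2 * 16 ^ s * (U:ℝ) ^ s * (δ / (16 * (U:ℝ)^2)) ^ s := by rw [heq]; ring
    _ ≤ _ := by gcongr


/-! ### The construction of the Cantor subset -/

def nxt (c₀ ℓ : ℕ) : ℕ × ℕ → ℕ × ℕ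
  | (0, N) => (N + c₀, N + 1)
  | (1, N) => (0, N + 1)
  | (c + 2, N) => (c + 1, N + ℓ)

def stt (c₀ ℓ : ℕ) : ℕ → ℕ × ℕ
  | 0 => (1, 0)
  | i + 1 => nxt c₀ ℓ (stt c₀ ℓ i)

noncomputable def Vd (B s : ℝ) (N : ℕ) : ℕ := ⌈B ^ ((1 - s) * (N:ℝ))⌉₊
noncomputable def Ud (B s : ℝ) (N : ℕ) : ℕ := ⌈B ^ (s * ((N:ℝ) + 1))⌉₊

noncomputable def Sst (B s : ℝ) (A : Finset (List ℕ)) : ℕ × ℕ → Finset (List ℕ)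
  | (0, N) => digS (Vd B s N)
  | (1, N) => digS (Ud B s N)
  | (_ + 2, _) => A

noncomputable def pst (B s : ℝ) (A : Finset (List ℕ)) : ℕ × ℕ → List ℕ → ℝ
  | (0, N), _ => (Vd B s N : ℝ)⁻¹
  | (1, N), _ => (Ud B s N : ℝ)⁻¹
  | (_ + 2, _), w => cfD w 0 ^ (-(2 * s)) / ∑ w ∈ A, cfD w 0 ^ (-(2 * s))

noncomputable def rst (B s : ℝ) : ℕ × ℕ → ℝ
  | (0, N) => 16 ^ (2 * s) * B ^ (s ^ 2) * B ^ ((s ^ 2 - s) * (N:ℝ))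
  | (c + 1, N) => B ^ (s ^ 2 * ((c:ℝ) - N))

lemma ceil_bds {X : ℝ} (h : 1 ≤ X) : X ≤ (⌈X⌉₊ : ℝ) ∧ (⌈X⌉₊ : ℝ) ≤ 2 * X :=
  ⟨Nat.le_ceil X, by have := Nat.ceil_lt_add_one (by linarith : 0 ≤ X); linarith⟩

lemma Vd_bds {B s : ℝ} (hB : 1 < B) (hs1 : s < 1) (N : ℕ) : 1 ≤ B ^ ((1 - s) * (N:ℝ)) ∧
    B ^ ((1 - s) * (N:ℝ)) ≤ Vd B s N ∧ (Vd B s N : ℝ) ≤ 2 * B ^ ((1 - s) * (N:ℝ)) := by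
  have h : 1 ≤ B ^ ((1 - s) * (N:ℝ)) :=
    Real.one_le_rpow hB.le (mul_nonneg (by linarith) (by positivity))
  exact ⟨h, ceil_bds h⟩

lemma Ud_bds {B s : ℝ} (hB : 1 < B) (hs : 0 < s) (N : ℕ) : 1 ≤ B ^ (s * ((N:ℝ) + 1)) ∧
    B ^ (s * ((N:ℝ) + 1)) ≤ Ud B s N ∧ (Ud B s N : ℝ) ≤ 2 * B ^ (s * ((N:ℝ) + 1)) := by
  have h : 1 ≤ B ^ (s * ((N:ℝ) + 1)) :=
    Real.one_le_rpow hB.le (by positivity)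
  exact ⟨h, ceil_bds h⟩

lemma digS_sum {U : ℕ} (h : (0:ℝ) < U) : ∑ _w ∈ digS U, (U:ℝ)⁻¹ = 1 := by
  rw [Finset.sum_const, digS_card, nsmul_eq_mul, mul_inv_cancel₀ h.ne']

lemma digS_pos {U : ℕ} {w : List ℕ} (h : w ∈ digS U) : PosW w ∧ w ≠ [] ∧ w.length = 1 := by
  obtain ⟨j, hj, rfl⟩ := mem_digS.1 h
  refine ⟨?_, by simp, by simp⟩
  intro a ha
  simp at ha
  omega

lemma digS_bds {U : ℕ} {w : List ℕ} (h : w ∈ digS U) (a : ℕ) (ha : a ∈ w) : U ≤ a ∧ a ≤ 4 * U := by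
  obtain ⟨j, hj, rfl⟩ := mem_digS.1 h
  simp at ha
  omega

lemma stt_inv {c₀ ℓ : ℕ} (hc : 1 ≤ c₀) (i : ℕ) : (stt c₀ ℓ i).1 ≤ (stt c₀ ℓ i).2 + c₀ := by
  induction i with
  | zero => simpa [stt] using hc
  | succ i ih =>
    simp only [stt]
    generalize stt c₀ ℓ i = σ at *
    obtain ⟨c, N⟩ := σ
    match c, ih with
    | 0, _ => simp only [nxt]; omega
    | 1, _ => simp only [nxt]; omega
    | c + 2, ih => simp only [nxt] at *; omega

lemma rst_nonneg {B s : ℝ} (hB : 1 < B) : ∀ σ, 0 ≤ rst B s σ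
  | (0, N) => by simp only [rst]; positivity
  | (c + 1, N) => by simp only [rst]; positivity

lemma rst_le {B s : ℝ} {c₀ : ℕ} (hB : 1 < B) (hs : 0 < s) (hs1 : s < 1) : ∀ σ : ℕ × ℕ, σ.1 ≤ σ.2 + c₀ →
    rst B s σ ≤ 16 ^ (2 * s) * B ^ (s ^ 2) + B ^ (s ^ 2 * (c₀:ℝ))
  | (0, N), _ => by
    simp only [rst]
    have h1 : B ^ ((s ^ 2 - s) * (N:ℝ)) ≤ 1 := by
      apply Real.rpow_le_one_of_one_le_of_nonpos hB.le
      exact mul_nonpos_of_nonpos_of_nonneg (by nlinarith) (by positivity)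
    have h2 : 0 ≤ B ^ (s ^ 2 * (c₀:ℝ)) := by positivity
    have h3 : 0 ≤ 16 ^ (2 * s) * B ^ (s ^ 2) := by positivity
    nlinarith
  | (c + 1, N), h => by
    simp only [rst]
    have h3 : 0 ≤ 16 ^ (2 * s) * B ^ (s ^ 2) := by positivity
    have h' : (c:ℝ) + 1 ≤ N + c₀ := by exact_mod_cast h
    have : B ^ (s ^ 2 * ((c:ℝ) - N)) ≤ B ^ (s ^ 2 * (c₀:ℝ)) :=
      Real.rpow_le_rpow_of_exponent_le hB.le (by gcongr; linarith)
    linarith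

lemma rst_step {B s : ℝ} {c₀ ℓ : ℕ} {A : Finset (List ℕ)} (hB : 1 < B) (hs : 0 < s) (hs1 : s < 1)
    (hA : ∀ w ∈ A, PosW w)
    (hsum : 2 ^ (2 * s) * B ^ (s ^ 2 * ((ℓ:ℝ) + 1)) ≤ ∑ w ∈ A, cfD w 0 ^ (-(2 * s)))
    (hc1 : 1 ≤ c₀)
    (hc : 16 ^ (2 * s) * 16 ^ (2 * s) * B ^ (s ^ 2) ≤ B ^ (s ^ 2 * ((c₀:ℝ) - 2))) :
    ∀ σ : ℕ × ℕ, ∀ w ∈ Sst B s A σ,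
      rst B s σ * pst B s A σ w * (2 * cfD w 0) ^ (2 * s) ≤ rst B s (nxt c₀ ℓ σ)
  | (0, N), w, hw => by
    have hB0 : 0 < B := by linarith
    obtain ⟨h1, h2, h3⟩ := Vd_bds hB hs1 N
    have := dig_step hs h1 h2 h3 hw
    have e : rst B s (nxt c₀ ℓ (0, N)) = B ^ (s ^ 2 * ((c₀:ℝ) - 2)) := by
      obtain ⟨c, rfl⟩ : ∃ c, c₀ = c + 1 := ⟨c₀ - 1, by omega⟩
      simp only [nxt, rst, ← add_assoc]
      congr 1; push_cast; ring
    rw [e]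
    refine le_trans ?_ hc
    simp only [rst, pst]
    rw [mul_assoc]
    have h5 : B ^ (((1 - s) * (N:ℝ)) * (2 * s - 1)) * B ^ ((s ^ 2 - s) * (N:ℝ)) ≤ 1 := by
      rw [← Real.rpow_add hB0]
      apply Real.rpow_le_one_of_one_le_of_nonpos hB.le
      have : (1 - s) * (N:ℝ) * (2 * s - 1) + (s ^ 2 - s) * N = - ((1-s)^2 * N) := by ring
      rw [this]
      have : 0 ≤ (1-s)^2 * (N:ℝ) := by positivity
      linarith
    rw [← Real.rpow_mul hB0.le] at this
    calc _ ≤ 16 ^ (2 * s) * B ^ s ^ 2 * B ^ ((s ^ 2 - s) * (N:ℝ)) *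
        (16 ^ (2 * s) * B ^ ((1 - s) * (N:ℝ) * (2 * s - 1))) := by gcongr
      _ = 16 ^ (2 * s) * 16 ^ (2 * s) * B ^ s ^ 2 *
        (B ^ (((1 - s) * (N:ℝ)) * (2 * s - 1)) * B ^ ((s ^ 2 - s) * (N:ℝ))) := by ring
      _ ≤ 16 ^ (2 * s) * 16 ^ (2 * s) * B ^ s ^ 2 * 1 := by gcongr
      _ = _ := by ring
  | (1, N), w, hw => by
    have hB0 : 0 < B := by linarith
    obtain ⟨h1, h2, h3⟩ := Ud_bds hB hs N
    have := dig_step hs h1 h2 h3 hw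
    rw [← Real.rpow_mul hB0.le] at this
    have e : rst B s (1, N) = B ^ (s ^ 2 * (((0:ℕ):ℝ) - N)) := rfl
    rw [e]
    simp only [rst, pst, nxt]
    rw [mul_assoc]
    calc _ ≤ B ^ (s ^ 2 * (((0:ℕ):ℝ) - N)) * (16 ^ (2 * s) * B ^ (s * ((N:ℝ) + 1) * (2 * s - 1))) := by
          gcongr
      _ = 16 ^ (2*s) * (B ^ (s ^ 2 * (((0:ℕ):ℝ) - N)) * B ^ (s * ((N:ℝ) + 1) * (2 * s - 1))) := by ring
      _ = 16 ^ (2*s) * (B ^ s ^ 2 * B ^ ((s ^ 2 - s) * ((N + 1 : ℕ) : ℝ))) := by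
          rw [← Real.rpow_add hB0, ← Real.rpow_add hB0]
          congr 2; push_cast; ring
      _ = _ := by ring
      _ ≤ _ := le_rfl
  | (c + 2, N), w, hw => by
    have hB0 : 0 < B := by linarith
    have hD := one_le_cfD (hA w hw) (le_refl (0:ℝ))
    have e : rst B s (c + 2, N) = B ^ (s ^ 2 * (((c+1:ℕ):ℝ) - N)) := rfl
    rw [e]
    simp only [rst, pst, nxt]
    set Z := ∑ w ∈ A, cfD w 0 ^ (-(2 * s))
    have hZ : 0 < Z := lt_of_lt_of_le (by positivity) hsum
    have h1 : cfD w 0 ^ (-(2*s)) * cfD w 0 ^ (2*s) = 1 := by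
      rw [← Real.rpow_add (by linarith)]; simp
    rw [Real.mul_rpow (by norm_num) (by linarith)]
    calc _ = B ^ (s ^ 2 * (((c+1:ℕ):ℝ) - N)) * ((cfD w 0 ^ (-(2*s)) * cfD w 0 ^ (2*s)) * (2 ^ (2*s) / Z)) := by ring
      _ = B ^ (s ^ 2 * (((c+1:ℕ):ℝ) - N)) * 2 ^ (2*s) / Z := by rw [h1]; ring
      _ ≤ _ := by
        rw [div_le_iff₀ hZ]
        refine le_trans (le_of_eq ?_) (mul_le_mul_of_nonneg_left hsum (by positivity))
        rw [mul_left_comm, ← Real.rpow_add hB0, mul_comm]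
        congr 2; push_cast; ring

lemma rst_sep {B s κ : ℝ} {c₀ : ℕ} {A : Finset (List ℕ)} (hB : 1 < B) (hs : 0 < s) (hs1 : s < 1)
    (hκ : 0 < κ)
    (hsep : ∀ d ∈ A, ∀ d' ∈ A, d ≠ d' → ∀ θ ∈ Icc (0:ℝ) 1, ∀ θ' ∈ Icc (0:ℝ) 1, κ ≤ |cfm d θ - cfm d' θ'|)
    {C : ℝ} (hC1 : (16 ^ (2 * s) * B ^ (s ^ 2) + B ^ (s ^ 2 * (c₀:ℝ))) / κ ^ s ≤ C)
    (hC2 : 2 * 16 ^ s * (16 ^ (2 * s) * B ^ (s ^ 2) * 2 ^ s) ≤ C) :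
    ∀ σ : ℕ × ℕ, σ.1 ≤ σ.2 + c₀ → ∀ R ⊆ Sst B s A σ, (∃ d ∈ R, ∃ d' ∈ R, d ≠ d') → ∃ d ∈ R, ∃ d' ∈ R,
      ∀ θ ∈ Icc (0:ℝ) 1, ∀ θ' ∈ Icc (0:ℝ) 1,
        rst B s σ * ∑ w ∈ R, pst B s A σ w ≤ C * |cfm d θ - cfm d' θ'| ^ s
  | (0, N), _, R, hR, hne => by
    have hB0 : 0 < B := by linarith
    obtain ⟨h1, h2, h3⟩ := Vd_bds hB hs1 N
    obtain ⟨d, hd, d', hd', h⟩ := dig_sep hs hs1 R hR hne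
    refine ⟨d, hd, d', hd', fun θ hθ θ' hθ' => ?_⟩
    have := h θ hθ θ' hθ'
    simp only [rst, pst]
    set G := |cfm d θ - cfm d' θ'| ^ s
    have hG : 0 ≤ G := by positivity
    have hU : (Vd B s N : ℝ) ^ s ≤ 2 ^ s * B ^ ((1-s) * (N:ℝ) * s) := by
      rw [Real.rpow_mul hB0.le, ← Real.mul_rpow (by norm_num) (by positivity)]
      exact Real.rpow_le_rpow (by positivity) h3 hs.le
    have h5 : B ^ ((s ^ 2 - s) * (N:ℝ)) * B ^ ((1-s) * (N:ℝ) * s) = 1 := by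
      rw [← Real.rpow_add hB0]
      ring_nf; simp
    calc _ ≤ 16 ^ (2 * s) * B ^ s ^ 2 * B ^ ((s ^ 2 - s) * (N:ℝ)) *
          (2 * 16 ^ s * (2 ^ s * B ^ ((1-s) * (N:ℝ) * s)) * G) := by
            gcongr
            refine this.trans ?_
            gcongr
      _ = 2 * 16 ^ s * (16 ^ (2 * s) * B ^ (s ^ 2) * 2 ^ s) * G *
          (B ^ ((s ^ 2 - s) * (N:ℝ)) * B ^ ((1-s) * (N:ℝ) * s)) := by ring
      _ ≤ _ := by rw [h5, mul_one]; gcongr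
  | (1, N), _, R, hR, hne => by
    have hB0 : 0 < B := by linarith
    obtain ⟨h1, h2, h3⟩ := Ud_bds hB hs N
    obtain ⟨d, hd, d', hd', h⟩ := dig_sep hs hs1 R hR hne
    refine ⟨d, hd, d', hd', fun θ hθ θ' hθ' => ?_⟩
    have := h θ hθ θ' hθ'
    have e : rst B s (1, N) = B ^ (s ^ 2 * (((0:ℕ):ℝ) - N)) := rfl
    rw [e]
    simp only [pst]
    set G := |cfm d θ - cfm d' θ'| ^ s
    have hG : 0 ≤ G := by positivity
    have hU : (Ud B s N : ℝ) ^ s ≤ 2 ^ s * B ^ (s * ((N:ℝ)+1) * s) := by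
      rw [Real.rpow_mul hB0.le, ← Real.mul_rpow (by norm_num) (by positivity)]
      exact Real.rpow_le_rpow (by positivity) h3 hs.le
    have h5 : B ^ (s ^ 2 * (((0:ℕ):ℝ) - N)) * B ^ (s * ((N:ℝ)+1) * s) = B ^ (s^2) := by
      rw [← Real.rpow_add hB0]
      congr 1; push_cast; ring
    have h6 : (1:ℝ) ≤ 16 ^ (2*s) := Real.one_le_rpow (by norm_num) (by linarith)
    calc _ ≤ B ^ (s ^ 2 * (((0:ℕ):ℝ) - N)) *
          (2 * 16 ^ s * (2 ^ s * B ^ (s * ((N:ℝ)+1) * s)) * G) := by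
            gcongr
            refine this.trans ?_
            gcongr
      _ = 2 * 16 ^ s * (1 * (B ^ (s ^ 2 * (((0:ℕ):ℝ) - N)) * B ^ (s * ((N:ℝ)+1) * s)) * 2 ^ s) * G := by ring
      _ ≤ 2 * 16 ^ s * (16 ^ (2 * s) * B ^ (s ^ 2) * 2 ^ s) * G := by
          rw [h5]; gcongr
      _ ≤ _ := by gcongr
  | (c + 2, N), hσ, R, hR, hne => by
    have hB0 : 0 < B := by linarith
    obtain ⟨d, hd, d', hd', hdd⟩ := hne
    refine ⟨d, hd, d', hd', fun θ hθ θ' hθ' => ?_⟩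
    have h1 := hsep d (hR hd) d' (hR hd') hdd θ hθ θ' hθ'
    have h2 := rst_le hB hs hs1 (c + 2, N) hσ
    have h0 := rst_nonneg (s := s) hB (c + 2, N)
    have h3 : ∑ w ∈ R, pst B s A (c + 2, N) w ≤ 1 := by
      have hnn : ∀ w ∈ A, 0 ≤ cfD w 0 ^ (-(2*s)) := fun w _ =>
        Real.rpow_nonneg (cfD_nonneg w) _
      simp only [pst]
      rw [← Finset.sum_div]
      refine div_le_one_of_le₀ (Finset.sum_le_sum_of_subset_of_nonneg hR fun w hw _ => hnn w hw)
        (Finset.sum_nonneg hnn)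
    have hκs : 0 < κ ^ s := by positivity
    rw [div_le_iff₀ hκs] at hC1
    have hC0 : 0 ≤ C := le_trans (by positivity) hC2
    calc _ ≤ rst B s (c + 2, N) * 1 := by gcongr
      _ ≤ C * κ ^ s := by linarith
      _ ≤ _ := by gcongr


lemma exists_Ioo_tail {ω : ℕ → List ℕ} (h : ∀ i, PosW (ω i)) (h' : ∀ i, ω i ≠ []) {x : ℝ}
    (hx : ∀ i, ∃ θ ∈ Icc (0:ℝ) 1, x = cfm (Wd ω i) θ) (i : ℕ) :
    ∃ y ∈ Ioo (0:ℝ) 1, x = cfm (Wd ω i) y := by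
  obtain ⟨θ, hθ, e⟩ := hx (i + 2)
  refine ⟨_, cfm_mem_Ioo' (h i) (h (i+1)) (h' i) (h' (i+1)) hθ, ?_⟩
  rw [e]
  simp only [Wd, cfm_append]

lemma Wd_irr {ω : ℕ → List ℕ} (h : ∀ i, PosW (ω i)) (h' : ∀ i, ω i ≠ []) {x : ℝ}
    (hx : ∀ i, ∃ θ ∈ Icc (0:ℝ) 1, x = cfm (Wd ω i) θ) : Irrational x := by
  rintro ⟨r, hr⟩
  obtain ⟨y, hy, e⟩ := exists_Ioo_tail h h' hx (r.den + 1)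
  have h1 := rat_length (Wd_pos h (r.den+1)) hy r.num r.den (by exact_mod_cast r.pos) (by
    rw [← e, ← hr, Rat.cast_def]; simp)
  have h2 := Wd_length h' (r.den + 1)
  omega

lemma Wd_pq {ω : ℕ → List ℕ} (h : ∀ i, PosW (ω i)) (h' : ∀ i, ω i ≠ []) {x : ℝ}
    (hx : ∀ i, ∃ θ ∈ Icc (0:ℝ) 1, x = cfm (Wd ω i) θ) (i j : ℕ) (hj : j < (ω i).length) :
    pq x ((Wd ω i).length + j + 1) = (ω i)[j] := by
  obtain ⟨y, hy, e⟩ := exists_Ioo_tail h h' hx (i + 1)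
  rw [e, pq_cfm (Wd_pos h (i+1)) hy ((Wd ω i).length + j) (by simp [Wd]; omega)]
  simp [Wd]

lemma Wd_pos_exists {ω : ℕ → List ℕ} (n i : ℕ) (hn : n < (Wd ω i).length) :
    ∃ k j, j < (ω k).length ∧ n = (Wd ω k).length + j := by
  induction i with
  | zero => simp [Wd] at hn
  | succ i ih =>
    by_cases hc : n < (Wd ω i).length
    · exact ih hc
    · refine ⟨i, n - (Wd ω i).length, ?_, by omega⟩
      simp [Wd] at hn
      omega

lemma Sst_len {B s : ℝ} {c₀ ℓ : ℕ} {A : Finset (List ℕ)} (hA : ∀ w ∈ A, w.length = ℓ) :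
    ∀ σ : ℕ × ℕ, ∀ w ∈ Sst B s A σ, (nxt c₀ ℓ σ).2 = σ.2 + w.length
  | (0, N), w, hw => by rw [(digS_pos hw).2.2]; rfl
  | (1, N), w, hw => by rw [(digS_pos hw).2.2]; rfl
  | (c + 2, N), w, hw => by rw [hA w hw]; rfl

lemma Sst_pos {B s : ℝ} {A : Finset (List ℕ)} (hA : ∀ w ∈ A, PosW w ∧ w ≠ []) :
    ∀ σ : ℕ × ℕ, ∀ w ∈ Sst B s A σ, PosW w ∧ w ≠ []
  | (0, N), w, hw => ⟨(digS_pos hw).1, (digS_pos hw).2.1⟩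
  | (1, N), w, hw => ⟨(digS_pos hw).1, (digS_pos hw).2.1⟩
  | (c + 2, N), w, hw => hA w hw

lemma Sst_digit {B s : ℝ} {A : Finset (List ℕ)} {M : ℕ} (hB : 1 < B) (hs : 0 < s) (hs1 : s < 1)
    (hA : ∀ w ∈ A, ∀ a ∈ w, a ≤ M) :
    ∀ σ : ℕ × ℕ, ∀ w ∈ Sst B s A σ, ∀ a ∈ w,
      (a:ℝ) ≤ ((M:ℝ) + 8) * B ^ (max s (1 - s) * ((σ.2:ℝ) + 1))
  | (0, N), w, hw, a, ha => by
    obtain ⟨h1, h2, h3⟩ := Vd_bds hB hs1 N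
    have h4 : (a:ℝ) ≤ 4 * Vd B s N := by exact_mod_cast (digS_bds hw a ha).2
    have h5 : B ^ ((1 - s) * (N:ℝ)) ≤ B ^ (max s (1 - s) * ((N:ℝ) + 1)) := by
      apply Real.rpow_le_rpow_of_exponent_le hB.le
      have := le_max_right s (1-s)
      apply mul_le_mul this (by linarith) (by positivity) (by linarith)
    have hM : (0:ℝ) ≤ M := by positivity
    show (a:ℝ) ≤ ((M:ℝ) + 8) * B ^ (max s (1 - s) * ((N:ℝ) + 1))
    nlinarith
  | (1, N), w, hw, a, ha => by
    obtain ⟨h1, h2, h3⟩ := Ud_bds hB hs N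
    have h4 : (a:ℝ) ≤ 4 * Ud B s N := by exact_mod_cast (digS_bds hw a ha).2
    have h5 : B ^ (s * ((N:ℝ) + 1)) ≤ B ^ (max s (1 - s) * ((N:ℝ) + 1)) := by
      apply Real.rpow_le_rpow_of_exponent_le hB.le
      have := le_max_left s (1-s)
      gcongr
    have hM : (0:ℝ) ≤ M := by positivity
    show (a:ℝ) ≤ ((M:ℝ) + 8) * B ^ (max s (1 - s) * ((N:ℝ) + 1))
    nlinarith
  | (c + 2, N), w, hw, a, ha => by
    have h4 : (a:ℝ) ≤ M := by exact_mod_cast hA w hw a ha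
    have h5 : 1 ≤ B ^ (max s (1 - s) * ((N:ℝ) + 1)) := by
      apply Real.one_le_rpow hB.le
      have := le_max_left s (1-s)
      have : 0 ≤ max s (1-s) := by linarith
      positivity
    have hM : (0:ℝ) ≤ M := by positivity
    show (a:ℝ) ≤ ((M:ℝ) + 8) * B ^ (max s (1 - s) * ((N:ℝ) + 1))
    nlinarith

lemma stt_hit_aux {c₀ ℓ : ℕ} (c : ℕ) : ∀ i, (stt c₀ ℓ i).1 = c + 1 → ∃ k, i ≤ k ∧ (stt c₀ ℓ k).1 = 1 := by
  induction c with
  | zero => intro i hi; exact ⟨i, le_rfl, hi⟩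
  | succ c ih =>
    intro i hi
    obtain ⟨k, hk, h⟩ := ih (i+1) (by
      simp only [stt]
      generalize stt c₀ ℓ i = σ at *
      obtain ⟨d, N⟩ := σ
      simp only at hi
      subst hi
      rfl)
    exact ⟨k, by omega, h⟩

lemma stt_hit {c₀ ℓ : ℕ} (hc : 1 ≤ c₀) (i : ℕ) : ∃ k, i ≤ k ∧ (stt c₀ ℓ k).1 = 1 := by
  rcases h : (stt c₀ ℓ i).1 with _ | c
  · have h1 : (stt c₀ ℓ (i+1)).1 = ((stt c₀ ℓ i).2 + c₀ - 1) + 1 := by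
      simp only [stt]
      generalize stt c₀ ℓ i = σ at *
      obtain ⟨d, N⟩ := σ
      simp only at h
      subst h
      simp only [nxt]
      omega
    obtain ⟨k, hk, h⟩ := stt_hit_aux _ (i+1) h1
    exact ⟨k, by omega, h⟩
  · exact stt_hit_aux c i h

lemma mem_FB {B s : ℝ} {c₀ ℓ M : ℕ} {A : Finset (List ℕ)} (hB : 1 < B) (hs : 0 < s) (hs1 : s < 1)
    (hc : 1 ≤ c₀) (hA : ∀ w ∈ A, PosW w ∧ w ≠ []) (hAl : ∀ w ∈ A, w.length = ℓ)
    (hAM : ∀ w ∈ A, ∀ a ∈ w, a ≤ M) (ω : ℕ → List ℕ) (hω : ∀ i, ω i ∈ Sst B s A (stt c₀ ℓ i))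
    (x : ℝ) (hx : ∀ i, ∃ θ ∈ Icc (0:ℝ) 1, x = cfm (Wd ω i) θ) : x ∈ FB B := by
  have hB0 : 0 < B := by linarith
  have h : ∀ i, PosW (ω i) := fun i => (Sst_pos hA _ _ (hω i)).1
  have h' : ∀ i, ω i ≠ [] := fun i => (Sst_pos hA _ _ (hω i)).2
  have hlen : ∀ i, (Wd ω i).length = (stt c₀ ℓ i).2 := by
    intro i
    induction i with
    | zero => rfl
    | succ i ih => simp only [Wd, List.length_append, ih, stt]; rw [Sst_len hAl _ _ (hω i)]
  refine ⟨?_, Wd_irr h h' hx, ?_, ?_⟩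
  · obtain ⟨y, hy, e⟩ := exists_Ioo_tail h h' hx 0
    rw [e]; exact hy
  · apply Set.infinite_of_forall_exists_gt
    intro a
    obtain ⟨k, hk, hk1⟩ := stt_hit (ℓ := ℓ) hc a
    obtain ⟨N, hN⟩ : ∃ N, stt c₀ ℓ k = (1, N) := ⟨_, Prod.ext hk1 rfl⟩
    have hN1 : stt c₀ ℓ (k+1) = (0, N + 1) := by simp only [stt, hN, nxt]
    have hk' := Wd_length h' k
    have l0 := hlen k
    have l1 := hlen (k+1)
    rw [hN] at l0
    rw [hN1] at l1
    simp only at l0 l1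
    have w0 := hω k
    have w1 := hω (k+1)
    rw [hN] at w0
    rw [hN1] at w1
    change ω k ∈ digS (Ud B s N) at w0
    change ω (k+1) ∈ digS (Vd B s (N+1)) at w1
    have p0 := Wd_pq h h' hx k 0 (List.length_pos_of_ne_nil (h' k))
    have p1 := Wd_pq h h' hx (k+1) 0 (List.length_pos_of_ne_nil (h' (k+1)))
    rw [l0, add_zero] at p0
    rw [l1, add_zero] at p1
    refine ⟨N + 1, ?_, by omega⟩
    show B ^ (N+1) ≤ (pq x (N+1) : ℝ) * (pq x (N+1+1) : ℝ)
    rw [p0, p1]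
    have u0 : (Ud B s N : ℝ) ≤ ((ω k)[0]'(List.length_pos_of_ne_nil (h' k)) : ℕ) := by
      exact_mod_cast (digS_bds w0 _ (List.getElem_mem _)).1
    have u1 : (Vd B s (N+1) : ℝ) ≤ ((ω (k+1))[0]'(List.length_pos_of_ne_nil (h' (k+1))) : ℕ) := by
      exact_mod_cast (digS_bds w1 _ (List.getElem_mem _)).1
    have b0 := (Ud_bds hB hs N).2.1.trans u0
    have b1 := (Vd_bds hB hs1 (N+1)).2.1.trans u1
    have e : B ^ (N+1) = B ^ (s * ((N:ℝ) + 1)) * B ^ ((1 - s) * ((N+1:ℕ):ℝ)) := by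
      rw [← Real.rpow_add hB0, ← Real.rpow_natCast]
      congr 1; push_cast; ring
    rw [e]
    exact mul_le_mul b0 b1 (by positivity) (by positivity)
  · set τ := max s (1 - s) with hτ
    have hτ0 : 0 < τ := lt_of_lt_of_le hs (le_max_left _ _)
    have hτ1 : τ < 1 := max_lt hs1 (by linarith)
    have hD : 1 < B ^ (1 - τ) := Real.one_lt_rpow hB (by linarith)
    filter_upwards [(tendsto_pow_atTop_atTop_of_one_lt hD).eventually_gt_atTop
      (((M:ℝ) + 8) * B ^ τ)] with n hn
    obtain ⟨k, j, hj, e⟩ := Wd_pos_exists (ω := ω) n (n+1) (by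
      have := Wd_length h' (n+1); omega)
    have p := Wd_pq h h' hx k j hj
    rw [← e] at p
    rw [p]
    have hd := Sst_digit hB hs hs1 hAM _ _ (hω k) _ (List.getElem_mem hj)
    refine hd.trans_lt ?_
    have hk : ((stt c₀ ℓ k).2 : ℝ) ≤ n := by
      rw [← hlen k]; exact_mod_cast (by omega)
    have e2 : B ^ n = B ^ (τ * (n:ℝ)) * (B ^ (1 - τ)) ^ n := by
      rw [← Real.rpow_natCast (B ^ (1-τ)), ← Real.rpow_mul hB0.le, ← Real.rpow_add hB0, ← Real.rpow_natCast]
      congr 1; ring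
    calc ((M:ℝ) + 8) * B ^ (τ * (((stt c₀ ℓ k).2 : ℝ) + 1))
        ≤ ((M:ℝ) + 8) * B ^ (τ * ((n:ℝ) + 1)) := by
          gcongr
          exact hB.le
      _ = B ^ (τ * (n:ℝ)) * (((M:ℝ) + 8) * B ^ τ) := by
          rw [mul_add, Real.rpow_add hB0]; ring_nf
      _ < B ^ (τ * (n:ℝ)) * (B ^ (1 - τ)) ^ n := by gcongr
      _ = _ := e2.symm

lemma lower_lt {B s : ℝ} (hB : 1 < B) (hs : 0 < s) (hst : s < tExp B) :
    ENNReal.ofReal s ≤ dimH (FB B) := by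
  have hB0 : 0 < B := by linarith
  have hs1 : s < 1 := hst.trans_le (tExp_le_one hB)
  obtain ⟨ℓ, A, M, κ, hℓ, hκ, hA, hsum, hsep⟩ := exists_blocks hB hs hst
  have hAp : ∀ w ∈ A, PosW w ∧ w ≠ [] := fun w hw => ⟨(hA w hw).1, by
    rintro rfl
    have := (hA _ hw).2.1
    simp at this; omega⟩
  obtain ⟨c, hc⟩ := ((tendsto_pow_atTop_atTop_of_one_lt
    (Real.one_lt_rpow hB (by positivity : 0 < s ^ 2))).eventually_ge_atTop
      ((16:ℝ) ^ (2 * s) * 16 ^ (2 * s) * B ^ (s ^ 2))).exists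
  have hc' : (16:ℝ) ^ (2 * s) * 16 ^ (2 * s) * B ^ (s ^ 2) ≤ B ^ (s ^ 2 * (((c+2:ℕ):ℝ) - 2)) := by
    refine hc.trans (le_of_eq ?_)
    rw [← Real.rpow_natCast, ← Real.rpow_mul hB0.le]
    congr 2; push_cast; ring
  set C1 : ℝ := 16 ^ (2 * s) * B ^ (s ^ 2) + B ^ (s ^ 2 * ((c+2:ℕ):ℝ)) with hC1
  have h1 : 0 < C1 := by positivity
  have h2 : 0 < C1 / κ ^ s := by positivity
  have h3 : (0:ℝ) < 2 * 16 ^ s * (16 ^ (2 * s) * B ^ (s ^ 2) * 2 ^ s) := by positivity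
  have hinv := fun i => stt_inv (ℓ := ℓ) (by omega : 1 ≤ c + 2) i
  refine abstract_lower (fun i => Sst B s A (stt (c+2) ℓ i)) (fun i => pst B s A (stt (c+2) ℓ i))
    (fun i => rst B s (stt (c+2) ℓ i)) s
    (C1 + C1 / κ ^ s + 2 * 16 ^ s * (16 ^ (2 * s) * B ^ (s ^ 2) * 2 ^ s)) hs (by positivity)
    (fun i => Sst_pos hAp _) ?_ ?_ ?_ ?_ ?_ ?_ (FB B) ?_
  · intro i w
    generalize stt (c+2) ℓ i = σ
    have hnn : ∀ w, 0 ≤ cfD w 0 ^ (-(2*s)) := fun w => Real.rpow_nonneg (cfD_nonneg w) _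
    match σ with
    | (0, N) => simp only [pst]; positivity
    | (1, N) => simp only [pst]; positivity
    | (c + 2, N) => simp only [pst]; exact div_nonneg (hnn _) (Finset.sum_nonneg fun w _ => hnn w)
  · intro i
    generalize stt (c+2) ℓ i = σ
    match σ with
    | (0, N) =>
      have := Vd_bds hB hs1 N
      exact digS_sum (by linarith)
    | (1, N) =>
      have := Ud_bds hB hs N
      exact digS_sum (by linarith)
    | (c + 2, N) =>
      simp only [pst, Sst]
      rw [← Finset.sum_div]
      exact div_self (lt_of_lt_of_le (by positivity) hsum).ne'
  · simp [stt, rst]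
  · intro i w hw
    exact rst_step hB hs hs1 (fun w hw => (hA w hw).1) hsum (by omega) hc' _ w hw
  · intro i
    have := rst_le hB hs hs1 _ (hinv i)
    linarith
  · intro i
    exact rst_sep hB hs hs1 hκ hsep (by linarith) (by linarith) _ (hinv i)
  · intro ω hω x hx
    exact mem_FB hB hs hs1 (by omega) hAp (fun w hw => (hA w hw).2.1) (fun w hw => (hA w hw).2.2) ω hω x hx

lemma lower_final {B : ℝ} (hB : 1 < B) : ENNReal.ofReal (tExp B) ≤ dimH (FB B) := by
  rcases (tExp_nonneg B).eq_or_lt with h | h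
  · rw [← h]; simp
  · have hcont : Tendsto (fun s : ℝ => ENNReal.ofReal s) (nhdsWithin (tExp B) (Iio (tExp B)))
        (nhds (ENNReal.ofReal (tExp B))) :=
      (ENNReal.continuous_ofReal.tendsto _).mono_left nhdsWithin_le_nhds
    refine le_of_tendsto hcont ?_
    filter_upwards [Ioo_mem_nhdsLT h] with s hs
    exact lower_lt hB hs.1 hs.2

theorem bakhtawar_bos_hussain (B : ℝ) (hB : 1 < B) :
    dimH {x : ℝ | x ∈ Set.Ioo (0 : ℝ) 1 ∧ Irrational x ∧
      {n : ℕ | B ^ n ≤ (pq x n : ℝ) * (pq x (n + 1) : ℝ)}.Infinite ∧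
      (∀ᶠ n : ℕ in Filter.atTop, (pq x (n + 1) : ℝ) < B ^ n)} =
    ENNReal.ofReal (tExp B) := by
  exact le_antisymm (upper_final hB) (lower_final hB)
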